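/- arXiv:2106.14044 — 3 statements merged into one kernel-verified Lean document; each statement's English description precedes it below -/
import Mathlib

section
/- Let p_i, p_j, p_k be distinct odd primes and M = p_i^2 p_j^2 p_k^2. Assume A ⊕ B = ℤ_M with |A| = |B| = p_i p_j p_k, that Φ_M | A, and that for every a ∈ A the set A ∩ Λ(a,D(M)) is M-fibered in at least one of the three directions. Suppose there exists a_0 ∈ A with a_0∗F_ν ⊆ A for all ν ∈ {i,j,k}. Then Λ(a_0,D(M)) ⊕ B = ℤ_M is also a tiling, and both A and B satisfy (T2). -/
open Polynomial

/-- The mask polynomial `A(X) = Σ_{a ∈ A} X^a` of a finite subset of `ZMod M`,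
using the representatives in `{0, …, M-1}`. -/
noncomputable def maskPoly (M : ℕ) (A : Finset (ZMod M)) : Polynomial ℤ :=
  ∑ a ∈ A, X ^ a.val

/-- `Φ_s | A` : the `s`-th cyclotomic polynomial divides the mask polynomial of `A` in `ℤ[X]`. -/
def cycDvd (M s : ℕ) (A : Finset (ZMod M)) : Prop :=
  cyclotomic s ℤ ∣ maskPoly M A

/-- `A ⊕ B = ℤ_M` : every element of `ℤ_M` has a unique representation `a + b`
with `a ∈ A` and `b ∈ B`. -/
def IsTiling (M : ℕ) (A B : Set (ZMod M)) : Prop :=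
  ∀ z : ZMod M, ∃! ab : ZMod M × ZMod M, ab.1 ∈ A ∧ ab.2 ∈ B ∧ ab.1 + ab.2 = z

/-- The Coven–Meyerowitz property (T2): whenever `s_1, …, s_m` are prime powers dividing `M`,
powers of pairwise distinct primes, with `Φ_{s_t} | A` for each `t`, then `Φ_{s_1 ⋯ s_m} | A`. -/
def SatisfiesT2 (M : ℕ) (A : Finset (ZMod M)) : Prop :=
  ∀ (P : Finset ℕ) (e : ℕ → ℕ), P.Nonempty →
    (∀ p ∈ P, p.Prime ∧ 1 ≤ e p ∧ p ^ e p ∣ M ∧ cycDvd M (p ^ e p) A) →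
    cycDvd M (∏ p ∈ P, p ^ e p) A

/-- The `D`-grid through `x` in `ZMod M` : `Λ(x, D) = {y : D ∣ y - x}`. -/
def gridSet (M : ℕ) (x : ZMod M) (D : ℕ) : Set (ZMod M) :=
  {y : ZMod M | (D : ZMod M) ∣ (y - x)}

/-- `S` is fibered in the `p` direction on scale `M`: every element of `S` has its whole
fiber `Λ(s, M/p)` contained in `S`. -/
def Fibered (M p : ℕ) (S : Set (ZMod M)) : Prop :=
  ∀ s ∈ S, gridSet M s (M / p) ⊆ S

/-- `Div_N(S)` : the set of values `(s - s', N) = gcd(s - s', N)` for `s, s' ∈ S`. -/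
def DivSet (M N : ℕ) (S : Set (ZMod M)) : Set ℕ :=
  {m : ℕ | ∃ s ∈ S, ∃ s' ∈ S, Nat.gcd (s - s').val N = m}

/-- The exponential sum `Σ_{x ∈ S} χ(t x)`. -/
noncomputable def hatSum {M : ℕ} [NeZero M] (S : Finset (ZMod M)) (t : ZMod M) : ℂ :=
  ∑ x ∈ S, ZMod.stdAddChar (t * x)

lemma hatSum_eq_aeval {M : ℕ} [NeZero M] (S : Finset (ZMod M)) (t : ZMod M) :
    hatSum S t = aeval (ZMod.stdAddChar t : ℂ) (maskPoly M S) := by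
  unfold hatSum maskPoly
  rw [map_sum]
  refine Finset.sum_congr rfl fun x _ => ?_
  rw [map_pow, aeval_X, ← AddChar.map_nsmul_eq_pow, nsmul_eq_mul, ZMod.natCast_zmod_val, mul_comm]

lemma isPrimitiveRoot_char {M : ℕ} [NeZero M] (t : ZMod M) :
    IsPrimitiveRoot (ZMod.stdAddChar t : ℂ) (addOrderOf t) := by
  rw [IsPrimitiveRoot.iff_def]
  constructor
  · rw [← AddChar.map_nsmul_eq_pow, addOrderOf_nsmul_eq_zero, AddChar.map_zero_eq_one]
  · intro l hl
    rw [← AddChar.map_nsmul_eq_pow, ← AddChar.map_zero_eq_one (ZMod.stdAddChar (N := M))] at hl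
    exact addOrderOf_dvd_of_nsmul_eq_zero (ZMod.injective_stdAddChar hl)

lemma cycDvd_iff {M : ℕ} [NeZero M] (S : Finset (ZMod M)) (t : ZMod M) :
    cycDvd M (addOrderOf t) S ↔ hatSum S t = 0 := by
  have h := isPrimitiveRoot_char t
  have hpos : 0 < addOrderOf t := addOrderOf_pos t
  unfold cycDvd
  rw [hatSum_eq_aeval, cyclotomic_eq_minpoly h hpos,
    ← minpoly.isIntegrallyClosed_dvd_iff (h.isIntegral hpos)]

lemma exists_order {M : ℕ} [NeZero M] {d : ℕ} (hd : d ∣ M) :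
    ∃ t : ZMod M, addOrderOf t = d := by
  obtain ⟨e, rfl⟩ := hd
  have h0 : d * e ≠ 0 := NeZero.ne _
  have he : e ≠ 0 := by rintro rfl; simp at h0
  refine ⟨(e : ZMod (d * e)), ?_⟩
  rw [ZMod.addOrderOf_coe _ h0, Nat.gcd_eq_right (Dvd.intro_left d rfl)]
  exact Nat.mul_div_cancel _ (Nat.pos_of_ne_zero he)

/-- Uniqueness in a tiling. -/
lemma IsTiling.uniq {M : ℕ} {A B : Set (ZMod M)} (h : IsTiling M A B) {a a' b b' : ZMod M}
    (ha : a ∈ A) (ha' : a' ∈ A) (hb : b ∈ B) (hb' : b' ∈ B) (e : a + b = a' + b') :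
    a = a' ∧ b = b' := by
  have := (h (a' + b')).unique (y₁ := (a, b)) (y₂ := (a', b')) ⟨ha, hb, e⟩ ⟨ha', hb', rfl⟩
  exact Prod.mk.inj this

lemma IsTiling.ex {M : ℕ} {A B : Set (ZMod M)} (h : IsTiling M A B) (z : ZMod M) :
    ∃ a ∈ A, ∃ b ∈ B, a + b = z := by
  obtain ⟨⟨a, b⟩, ⟨ha, hb, e⟩, _⟩ := h z
  exact ⟨a, ha, b, hb, e⟩

lemma IsTiling.mk' {M : ℕ} {A B : Set (ZMod M)} (h1 : ∀ z, ∃ a ∈ A, ∃ b ∈ B, a + b = z)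
    (h2 : ∀ a ∈ A, ∀ a' ∈ A, ∀ b ∈ B, ∀ b' ∈ B, a + b = a' + b' → a = a' ∧ b = b') :
    IsTiling M A B := by
  intro z
  obtain ⟨a, ha, b, hb, e⟩ := h1 z
  refine ⟨(a, b), ⟨ha, hb, e⟩, ?_⟩
  rintro ⟨x, y⟩ ⟨hx, hy, e'⟩
  obtain ⟨h, hsnd⟩ := h2 x hx a ha y hy b hb (e'.trans e.symm)
  refine Prod.ext ?_ ?_
  · exact h
  · exact hsnd

/-- Sum over a tiling. -/
lemma IsTiling.sum_eq {M : ℕ} [NeZero M] {A B : Finset (ZMod M)}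
    (h : IsTiling M (A : Set (ZMod M)) (B : Set (ZMod M))) {R : Type*} [AddCommMonoid R]
    (f : ZMod M → R) : ∑ x ∈ A ×ˢ B, f (x.1 + x.2) = ∑ z, f z := by
  refine Finset.sum_nbij (fun x => x.1 + x.2) (by simp) ?_ ?_ (by simp)
  · rintro ⟨a, b⟩ hx ⟨a', b'⟩ hy e
    simp only [Finset.coe_product, Set.mem_prod] at hx hy
    obtain ⟨h1, h2⟩ := h.uniq hx.1 hy.1 hx.2 hy.2 e
    simp [h1, h2]
  · intro z _
    obtain ⟨a, ha, b, hb, e⟩ := h.ex z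
    exact ⟨(a, b), by simpa using ⟨ha, hb⟩, e⟩

lemma IsTiling.card_mul {M : ℕ} [NeZero M] {A B : Finset (ZMod M)}
    (h : IsTiling M (A : Set (ZMod M)) (B : Set (ZMod M))) : A.card * B.card = M := by
  have := h.sum_eq (fun _ => (1 : ℕ))
  simpa [ZMod.card] using this

lemma IsTiling.hat_mul {M : ℕ} [NeZero M] {A B : Finset (ZMod M)}
    (h : IsTiling M (A : Set (ZMod M)) (B : Set (ZMod M))) {t : ZMod M} (ht : t ≠ 0) :
    hatSum A t * hatSum B t = 0 := by
  have h1 := h.sum_eq (fun z => (ZMod.stdAddChar (t * z) : ℂ))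
  have h2 : ∑ z, (ZMod.stdAddChar (t * z) : ℂ) = 0 :=
    AddChar.sum_eq_zero_of_ne_one (ZMod.isPrimitive_stdAddChar M ht)
  rw [h2] at h1
  rw [← h1]
  unfold hatSum
  rw [Finset.sum_mul_sum, ← Finset.sum_product']
  refine Finset.sum_congr rfl fun x _ => ?_
  rw [mul_add, AddChar.map_add_eq_mul]

/-- Theorem of Tijdeman, prime case. -/
lemma tijdeman {M : ℕ} [NeZero M] {A B : Finset (ZMod M)}
    (h : IsTiling M (A : Set (ZMod M)) (B : Set (ZMod M))) {p : ℕ} (hp : p.Prime)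
    (hpA : ¬ p ∣ A.card) :
    (∀ a ∈ A, ∀ a' ∈ A, ∀ b ∈ B, ∀ b' ∈ B, (p : ZMod M) * a + b = p * a' + b' → a = a' ∧ b = b')
    ∧ ∀ z : ZMod M, ∃ a ∈ A, ∃ b ∈ B, (p : ZMod M) * a + b = z := by
  classical
  have : Fact p.Prime := ⟨hp⟩
  let e : ZMod M → AddMonoidAlgebra (ZMod p) (ZMod M) := fun x => AddMonoidAlgebra.single x 1
  have he : ∀ x y, e x * e y = e (x + y) := fun x y => by
    simp [e, AddMonoidAlgebra.single_mul_single]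
  let U : AddMonoidAlgebra (ZMod p) (ZMod M) := ∑ z, e z
  have heU : ∀ x, e x * U = U := fun x => by
    simp only [U, Finset.mul_sum, he]
    exact Fintype.sum_equiv (Equiv.addLeft x) _ _ (fun _ => rfl)
  let FA : AddMonoidAlgebra (ZMod p) (ZMod M) := ∑ a ∈ A, e a
  let FB : AddMonoidAlgebra (ZMod p) (ZMod M) := ∑ b ∈ B, e b
  have h1 : FA * FB = U := by
    simp only [FA, FB, U]
    rw [Finset.sum_mul_sum, ← Finset.sum_product', ← h.sum_eq e]
    exact Finset.sum_congr rfl fun x _ => he _ _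
  have : CharP (AddMonoidAlgebra (ZMod p) (ZMod M)) p :=
    charP_of_injective_algebraMap (FaithfulSMul.algebraMap_injective (ZMod p)
      (AddMonoidAlgebra (ZMod p) (ZMod M))) p
  have h2 : FA ^ p = ∑ a ∈ A, e (p * a) := by
    simp only [FA]
    rw [sum_pow_char]
    refine Finset.sum_congr rfl fun x _ => ?_
    simp [e, AddMonoidAlgebra.single_pow]
  have h3 : FA * U = (A.card : ZMod p) • U := by
    simp only [FA]
    rw [Finset.sum_mul, Finset.sum_congr rfl (fun x _ => heU x), Finset.sum_const,
      Nat.cast_smul_eq_nsmul]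
  have h4 : ∀ n : ℕ, FA ^ n * U = (A.card : ZMod p) ^ n • U := by
    intro n
    induction n with
    | zero => simp
    | succ n ih => rw [pow_succ', mul_assoc, ih, mul_smul_comm, h3, smul_smul, pow_succ]
  have h5 : FA ^ p * FB = U := by
    have : FA ^ p = FA ^ (p - 1) * FA := by rw [← pow_succ, Nat.sub_add_cancel hp.one_le]
    rw [this, mul_assoc, h1, h4, ZMod.pow_card_sub_one_eq_one, one_smul]
    rwa [Ne, ZMod.natCast_eq_zero_iff]
  have h6 : ∑ x ∈ A ×ˢ B, e (p * x.1 + x.2) = U := by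
    rw [← h5, h2]
    simp only [FB]
    rw [Finset.sum_mul_sum, ← Finset.sum_product']
    exact Finset.sum_congr rfl fun x _ => (he _ _).symm
  have hsurj : ∀ z : ZMod M, ∃ a ∈ A, ∃ b ∈ B, (p : ZMod M) * a + b = z := by
    intro z
    by_contra hcon
    push Not at hcon
    have h7 := congrArg (fun f : AddMonoidAlgebra (ZMod p) (ZMod M) => f.coeff z) h6
    have h8 : (∑ x ∈ A ×ˢ B, e (p * x.1 + x.2) : AddMonoidAlgebra (ZMod p) (ZMod M)).coeff z = 0 := by
      simp only [e, AddMonoidAlgebra.coeff_sum]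
      rw [Finsupp.finsetSum_apply]
      refine Finset.sum_eq_zero fun x hx => ?_
      rw [Finset.mem_product] at hx
      simp [AddMonoidAlgebra.coeff_single, hcon _ hx.1 _ hx.2]
    have h9 : U.coeff z = 1 := by
      simp only [U, e, AddMonoidAlgebra.coeff_sum]
      rw [Finsupp.finsetSum_apply]
      simp [AddMonoidAlgebra.coeff_single, Finsupp.single_apply]
    simp only [h8, h9] at h7
    exact zero_ne_one h7
  refine ⟨?_, hsurj⟩
  have hinj : Set.InjOn (fun x : ZMod M × ZMod M => (p : ZMod M) * x.1 + x.2)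
      ((A ×ˢ B : Finset _) : Set (ZMod M × ZMod M)) := by
    apply Finset.injOn_of_card_image_eq
    have : (A ×ˢ B).image (fun x : ZMod M × ZMod M => (p : ZMod M) * x.1 + x.2) = Finset.univ := by
      ext z
      obtain ⟨a, ha, b, hb, e⟩ := hsurj z
      simp only [Finset.mem_image, Finset.mem_univ, iff_true]
      exact ⟨(a, b), by simp [ha, hb], e⟩
    rw [this, Finset.card_product, h.card_mul, Finset.card_univ, ZMod.card]
  intro a ha a' ha' b hb b' hb' hh
  have := @hinj (a, b) (by simp [ha, hb]) (a', b') (by simp [ha', hb']) hh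
  exact Prod.mk.inj this

lemma tijdeman_tiling {M : ℕ} [NeZero M] {A B : Finset (ZMod M)}
    (h : IsTiling M (A : Set (ZMod M)) (B : Set (ZMod M))) {p : ℕ} (hp : p.Prime)
    (hpA : ¬ p ∣ A.card) :
    (A.image (fun a => (p : ZMod M) * a)).card = A.card ∧
    IsTiling M ((A.image (fun a => (p : ZMod M) * a) : Finset (ZMod M)) : Set (ZMod M)) B ∧
    ∀ t, hatSum (A.image (fun a => (p : ZMod M) * a)) t = hatSum A (p * t) := by
  obtain ⟨h1, h2⟩ := tijdeman h hp hpA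
  have hinj : Set.InjOn (fun a => (p : ZMod M) * a) (A : Set (ZMod M)) := by
    intro a ha a' ha' e
    obtain ⟨_, _, b, hb, _⟩ := h.ex 0
    exact (h1 a ha a' ha' b hb b hb (by simpa using e)).1
  refine ⟨Finset.card_image_of_injOn hinj, ?_, ?_⟩
  · refine IsTiling.mk' ?_ ?_
    · intro z
      obtain ⟨a, ha, b, hb, e⟩ := h2 z
      exact ⟨p * a, by simpa using ⟨a, ha, rfl⟩, b, hb, e⟩
    · intro a ha a' ha' b hb b' hb' e
      simp only [Finset.coe_image, Set.mem_image] at ha ha'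
      obtain ⟨x, hx, rfl⟩ := ha
      obtain ⟨y, hy, rfl⟩ := ha'
      obtain ⟨r1, r2⟩ := h1 x hx y hy b hb b' hb' e
      exact ⟨by rw [r1], r2⟩
  · intro t
    unfold hatSum
    rw [Finset.sum_image hinj]
    refine Finset.sum_congr rfl fun x _ => ?_
    congr 1
    ring

lemma hatSum_periodic {M : ℕ} [NeZero M] {A : Finset (ZMod M)} {n : ZMod M}
    (hA : ∀ a ∈ A, ∀ c, a + n * c ∈ A) {t : ZMod M} (ht : t * n ≠ 0) : hatSum A t = 0 := by
  have h1 : hatSum A t = ZMod.stdAddChar (t * n) * hatSum A t := by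
    unfold hatSum
    rw [Finset.mul_sum]
    refine Finset.sum_nbij' (fun x => x - n) (fun x => x + n) ?_ ?_ ?_ ?_ ?_
    · intro a ha
      have := hA a ha (-1)
      rwa [mul_neg_one, ← sub_eq_add_neg] at this
    · intro a ha
      simpa using hA a ha 1
    · intro a _; ring
    · intro a _; ring
    · intro a _
      rw [← AddChar.map_add_eq_mul]
      congr 1
      ring
  have h2 : (ZMod.stdAddChar (t * n) : ℂ) ≠ 1 := by
    intro h
    rw [← AddChar.map_zero_eq_one (ZMod.stdAddChar (N := M))] at h
    exact ht (ZMod.injective_stdAddChar h)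
  have h3 : (ZMod.stdAddChar (t * n) - 1 : ℂ) * hatSum A t = 0 := by
    rw [sub_mul, one_mul, ← h1, sub_self]
  exact (mul_eq_zero.1 h3).resolve_left (sub_ne_zero.2 h2)

lemma fiber_split {M : ℕ} [NeZero M] {A : Finset (ZMod M)} {p n : ℕ} (hM : M = p * n)
    (hA : ∀ a ∈ A, ∀ c, a + (n : ZMod M) * c ∈ A) :
    ∃ A' ⊆ A, Set.InjOn (fun x : ZMod M × ℕ => x.1 + (n : ZMod M) * x.2)
      ((A' ×ˢ Finset.range p : Finset _) : Set (ZMod M × ℕ)) ∧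
      (A' ×ˢ Finset.range p).image (fun x : ZMod M × ℕ => x.1 + (n : ZMod M) * x.2) = A := by
  have hM0 : M ≠ 0 := NeZero.ne M
  have hn : 0 < n := by
    rcases Nat.eq_zero_or_pos n with h | h
    · simp [h] at hM; exact absurd hM hM0
    · exact h
  refine ⟨A.filter (fun a => a.val < n), Finset.filter_subset _ _, ?_, ?_⟩
  · have key : ∀ (x : ZMod M) (u : ℕ), x.val < n → u < p →
        (x + (n : ZMod M) * u).val = x.val + n * u := by
      intro x u hx hu
      have h1 : x + (n : ZMod M) * u = ((x.val + n * u : ℕ) : ZMod M) := by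
        push_cast; rw [ZMod.natCast_zmod_val]
      have h2 : x.val + n * u < M := by
        have : n * (u + 1) ≤ n * p := Nat.mul_le_mul_left n hu
        nlinarith
      rw [h1, ZMod.val_natCast_of_lt h2]
    rintro ⟨x, u⟩ hx ⟨y, v⟩ hy e
    simp only [Finset.coe_product, Set.mem_prod, Finset.coe_filter, Set.mem_ofPred_eq,
      Finset.coe_range, Set.mem_Iio] at hx hy
    have e' := congrArg ZMod.val e
    simp only [key x u hx.1.2 hx.2, key y v hy.1.2 hy.2] at e'
    have h1 := congrArg (· % n) e'
    simp only [Nat.add_mul_mod_self_left, Nat.mod_eq_of_lt hx.1.2, Nat.mod_eq_of_lt hy.1.2] at h1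
    have h2 : n * u = n * v := by omega
    have h3 := Nat.eq_of_mul_eq_mul_left hn h2
    rw [Prod.mk.injEq]
    exact ⟨ZMod.val_injective M h1, h3⟩
  · ext a
    simp only [Finset.mem_image, Finset.mem_product, Finset.mem_filter, Finset.mem_range,
      Prod.exists]
    constructor
    · rintro ⟨x, u, ⟨⟨hx, _⟩, _⟩, rfl⟩
      exact hA x hx _
    · intro ha
      have h0 : a.val % n < n := Nat.mod_lt _ hn
      have hlt := ZMod.val_lt a
      have h1 : ((a.val % n : ℕ) : ZMod M) + n * (a.val / n : ℕ) = a := by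
        rw [← Nat.cast_mul, ← Nat.cast_add, Nat.mod_add_div, ZMod.natCast_zmod_val]
      refine ⟨((a.val % n : ℕ) : ZMod M), a.val / n, ⟨⟨?_, ?_⟩, ?_⟩, h1⟩
      · have := hA a ha (-((a.val / n : ℕ) : ZMod M))
        convert this using 1
        nth_rewrite 2 [← h1]
        ring
      · rw [ZMod.val_natCast_of_lt]
        · exact h0
        · exact lt_of_le_of_lt (Nat.mod_le _ _) hlt
      · rw [Nat.div_lt_iff_lt_mul hn, ← hM]; exact hlt

lemma mixed_diff {M : ℕ} [NeZero M] {S : Finset (ZMod M)} {x y : ZMod M}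
    (h : ∀ t : ZMod M, t * x ≠ 0 → t * y ≠ 0 → hatSum S t = 0) {b : ZMod M} (hb : b ∈ S) :
    b + x ∈ S ∨ b + y ∈ S := by
  classical
  let f : ZMod M → ℂ := fun z => if z ∈ S then 1 else 0
  let G : ZMod M → ℂ := fun z => f z - f (z + x) - f (z + y) + f (z + x + y)
  have hf : ∀ k w, ∑ z, ZMod.stdAddChar (-(z * k)) * f (z + w) =
      ZMod.stdAddChar (k * w) * hatSum S (-k) := by
    intro k w
    unfold hatSum
    rw [Finset.mul_sum, ← Fintype.sum_equiv (Equiv.subRight w)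
      (fun z => ZMod.stdAddChar (k * w) * (ZMod.stdAddChar (-k * z) * f z))]
    · simp only [f]
      simp
    · intro z
      simp only [Equiv.subRight_apply, sub_add_cancel]
      rw [← mul_assoc, ← AddChar.map_add_eq_mul]
      congr 2
      ring
  have hG : ZMod.dft G = 0 := by
    ext k
    rw [ZMod.dft_apply]
    have : ∑ z, ZMod.stdAddChar (-(z * k)) • G z =
        (1 - ZMod.stdAddChar (k * x)) * (1 - ZMod.stdAddChar (k * y)) * hatSum S (-k) := by
      have e1 := hf k 0
      have e2 := hf k x
      have e3 := hf k y
      have e4 := hf k (x + y)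
      simp only [G, smul_eq_mul, mul_add, mul_sub, Finset.sum_add_distrib, Finset.sum_sub_distrib]
      simp only [add_zero, mul_zero, AddChar.map_zero_eq_one] at e1
      rw [mul_add, AddChar.map_add_eq_mul] at e4
      simp only [← add_assoc] at e4
      rw [e1, e2, e3, e4]
      ring
    rw [this]
    by_cases hx : k * x = 0
    · simp [hx]
    by_cases hy : k * y = 0
    · simp [hy]
    rw [h (-k) (by simpa using hx) (by simpa using hy)]
    simp
  have hG0 : G = 0 := by simpa using hG
  by_contra hcon
  push Not at hcon
  have := congrFun hG0 b
  simp only [G, f, hb, hcon.1, hcon.2, if_true, if_false, Pi.zero_apply] at this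
  split_ifs at this <;> norm_num at this

lemma natCast_dvd_zmod {M N : ℕ} [NeZero M] (hN : N ∣ M) (x y : ZMod M) :
    (N : ZMod M) ∣ x - y ↔ ZMod.castHom hN (ZMod N) x = ZMod.castHom hN (ZMod N) y := by
  rw [← sub_eq_zero, ← map_sub]
  generalize x - y = z
  constructor
  · rintro ⟨c, rfl⟩
    rw [map_mul, map_natCast]
    simp
  · intro h
    rw [← ZMod.natCast_zmod_val z, map_natCast, ZMod.natCast_eq_zero_iff] at h
    obtain ⟨c, hc⟩ := h
    rw [← ZMod.natCast_zmod_val z, hc]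
    exact ⟨c, by push_cast; rfl⟩

lemma sq_dvd_card {M x : ℕ} (hx : x.Prime) (S : Finset (ZMod M))
    (h1 : cycDvd M x S) (h2 : cycDvd M (x ^ 2) S) : x ^ 2 ∣ S.card := by
  have : Fact x.Prime := ⟨hx⟩
  have hcop : IsRelPrime (cyclotomic x ℤ) (cyclotomic (x ^ 2) ℤ) := by
    refine (cyclotomic.irreducible hx.pos).isRelPrime_iff_not_dvd.2 ?_
    intro hd
    have h3 := (cyclotomic.irreducible hx.pos).associated_of_dvd
      (cyclotomic.irreducible (pow_pos hx.pos 2)) hd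
    have h4 := eq_of_monic_of_associated (cyclotomic.monic _ _) (cyclotomic.monic _ _) h3
    have h5 := cyclotomic_injective h4
    have := hx.one_lt
    nlinarith
  obtain ⟨Q, hQ⟩ := hcop.mul_dvd h1 h2
  have h6 := congrArg (eval 1) hQ
  have h7 : eval 1 (maskPoly M S) = (S.card : ℤ) := by
    simp [maskPoly, eval_finsetSum]
  rw [h7, eval_mul, eval_mul, eval_one_cyclotomic_prime] at h6
  have h8 : eval 1 (cyclotomic (x ^ 2) ℤ) = (x : ℤ) := eval_one_cyclotomic_prime_pow 1
  rw [h8] at h6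
  have : ((x ^ 2 : ℕ) : ℤ) ∣ S.card := ⟨eval 1 Q, by rw [h6]; push_cast; ring⟩
  exact_mod_cast this

lemma two_dir_contra {M : ℕ} [NeZero M] {A B : Finset (ZMod M)} {p n m' : ℕ} (hp : p.Prime)
    (hM : M = p * n) (h : IsTiling M (A : Set (ZMod M)) (B : Set (ZMod M)))
    (hA : ∀ a ∈ A, ∀ c, a + (n : ZMod M) * c ∈ A)
    (hcard : A.card = p * m') (hm' : ¬ p ∣ m') {a0 x y : ZMod M}
    (hx : ∀ c, a0 + x * c ∈ A) (hy : ∀ c, a0 + y * c ∈ A)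
    (hx0 : x ≠ 0) (hy0 : y ≠ 0)
    (hxu : ∃ u, (p : ZMod M) * (p * (x * u)) = x) (hyu : ∃ u, (p : ZMod M) * (p * (y * u)) = y)
    (hhat : ∀ t : ZMod M, t * x ≠ 0 → t * y ≠ 0 → hatSum A (p * (p * t)) ≠ 0) : False := by
  classical
  obtain ⟨A', hsub, hinj, him⟩ := fiber_split hM hA
  have hpn : (p : ZMod M) * n = 0 := by
    rw [← Nat.cast_mul, ← hM]; simp
  have hcA' : A'.card = m' := by
    have h1 := congrArg Finset.card him
    rw [Finset.card_image_of_injOn hinj, Finset.card_product, Finset.card_range, hcard,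
      mul_comm] at h1
    exact Nat.eq_of_mul_eq_mul_left hp.pos h1
  have hrep : ∀ a ∈ A, ∃ a' ∈ A', ∃ c : ZMod M, a = a' + n * c := by
    intro a ha
    rw [← him, Finset.mem_image] at ha
    obtain ⟨⟨a', u⟩, h1, h2⟩ := ha
    rw [Finset.mem_product] at h1
    exact ⟨a', h1.1, u, h2.symm⟩
  have hrep_uniq : ∀ a ∈ A', ∀ a' ∈ A', ∀ c : ZMod M, a = a' + n * c → a = a' := by
    intro a ha a' ha' c hc
    have h1 : (n : ZMod M) * c = n * ((c.val % p : ℕ) : ZMod M) := by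
      conv_lhs => rw [← ZMod.natCast_zmod_val c, ← Nat.mod_add_div c.val p]
      push_cast
      rw [mul_add, ← mul_assoc, mul_comm (n : ZMod M) p, hpn, zero_mul, add_zero]
    have h2 : ((a, 0) : ZMod M × ℕ) = (a', c.val % p) := by
      apply hinj
      · simp [ha, hp.pos]
      · simp [ha', Nat.mod_lt _ hp.pos]
      · simp only [Nat.cast_zero, mul_zero, add_zero]
        rw [← h1]; exact hc
    exact (Prod.mk.inj h2).1
  let B' : Finset (ZMod M) := Finset.univ.filter (fun z => ∃ b ∈ B, ∃ c, z = b + n * c)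
  have hB' : ∀ z, z ∈ (B' : Set (ZMod M)) ↔ ∃ b ∈ B, ∃ c, z = b + n * c := by
    intro z; simp [B']
  have hT : IsTiling M (A' : Set (ZMod M)) (B' : Set (ZMod M)) := by
    refine IsTiling.mk' ?_ ?_
    · intro z
      obtain ⟨a, ha, b, hb, e⟩ := h.ex z
      obtain ⟨a', ha', c, rfl⟩ := hrep a ha
      refine ⟨a', ha', b + n * c, (hB' _).2 ⟨b, hb, c, rfl⟩, ?_⟩
      rw [← e]; ring
    · intro a ha a' ha' b hb b' hb' e
      obtain ⟨β, hβ, c, rfl⟩ := (hB' _).1 hb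
      obtain ⟨β', hβ', c', rfl⟩ := (hB' _).1 hb'
      have h1 := h.uniq (hA a (hsub ha) (c - c')) (hsub ha') hβ hβ' (by
        rw [← sub_eq_zero] at e ⊢
        rw [← e]; ring)
      have h2 := hrep_uniq a' ha' a ha (c - c') h1.1.symm
      subst h2
      exact ⟨rfl, by simpa using e⟩
  obtain ⟨c1, t1, s1⟩ := tijdeman_tiling hT hp (by rwa [hcA'])
  obtain ⟨c2, t2, s2⟩ := tijdeman_tiling t1 hp (by rwa [c1, hcA'])
  have hA'hat : ∀ t, hatSum A' (p * t) = 0 → hatSum A (p * t) = 0 := by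
    intro t ht
    have : hatSum A (p * t) = ∑ v ∈ Finset.range p, hatSum A' (p * t) := by
      unfold hatSum
      rw [← him, Finset.sum_image hinj, Finset.sum_product_right]
      refine Finset.sum_congr rfl fun v _ => Finset.sum_congr rfl fun z _ => ?_
      congr 1
      rw [mul_add]
      have : (p : ZMod M) * t * (n * v) = (p * n) * (t * v) := by ring
      rw [this, hpn, zero_mul, add_zero]
    rw [this, ht]; simp
  have hBhat : ∀ t : ZMod M, t * x ≠ 0 → t * y ≠ 0 → hatSum B' t = 0 := by
    intro t htx hty
    have ht0 : t ≠ 0 := by rintro rfl; simp at htx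
    have h1 := t2.hat_mul ht0
    rw [s2, s1] at h1
    refine (mul_eq_zero.1 h1).resolve_left fun h2 => hhat t htx hty ?_
    exact hA'hat _ h2
  have hno : ∀ w : ZMod M, w ≠ 0 → (∀ c, a0 + w * c ∈ A) →
      (∃ u, (p : ZMod M) * (p * (w * u)) = w) → ∀ b ∈ B', b + w ∉ B' := by
    intro w hw0 hw ⟨u, hu⟩ b hb hbw
    obtain ⟨a1, ha1, d1, e1⟩ := hrep a0 (by simpa using hw 0)
    obtain ⟨a2, ha2, d2, e2⟩ := hrep _ (hw u)
    have h1 := t2.uniq (a := p * (p * a1)) (a' := p * (p * a2)) (b := b + w) (b' := b)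
      (by simp only [Finset.coe_image, Set.mem_image]
          exact ⟨p * a1, ⟨a1, ha1, rfl⟩, rfl⟩)
      (by simp only [Finset.coe_image, Set.mem_image]
          exact ⟨p * a2, ⟨a2, ha2, rfl⟩, rfl⟩) hbw hb (by
        have f1 : (p : ZMod M) * (p * a1) = p * (p * a0) := by
          rw [e1]
          linear_combination (-(p : ZMod M) * d1) * hpn
        have f2 : (p : ZMod M) * (p * a2) = p * (p * a0) + w := by
          have : a2 = a0 + w * u - n * d2 := by rw [e2]; ring
          rw [this]
          linear_combination (-(p : ZMod M) * d2) * hpn + hu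
        rw [f1, f2]; ring)
    exact hw0 (by simpa using h1.2)
  obtain ⟨_, _, b, hb, _⟩ := hT.ex 0
  rcases mixed_diff hBhat hb with h1 | h1
  · exact hno x hx0 hx hxu b hb h1
  · exact hno y hy0 hy hyu b hb h1

lemma exists_scale {M p q : ℕ} (hp : p.Prime) (hq : q.Prime) (hpq : p ≠ q) {w : ℕ}
    (hM : M = q * w) :
    ∃ u : ZMod M, (p : ZMod M) * (p * ((w : ZMod M) * u)) = w := by
  have hc : IsCoprime ((p ^ 2 : ℕ) : ℤ) (q : ℤ) :=
    Nat.isCoprime_iff_coprime.2 (((Nat.coprime_primes hp hq).2 hpq).pow_left 2)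
  obtain ⟨u, v, huv⟩ := hc
  refine ⟨(u : ZMod M), ?_⟩
  have h1 : ((q : ZMod M)) * w = 0 := by rw [← Nat.cast_mul, ← hM]; simp
  have h2 := congrArg (Int.cast : ℤ → ZMod M) huv
  push_cast at h2
  linear_combination (w : ZMod M) * h2 - (v : ZMod M) * h1

lemma core (p q r : ℕ) (hp : p.Prime) (hq : q.Prime) (hr : r.Prime)
    (hpq : p ≠ q) (hpr : p ≠ r) (hqr : q ≠ r)
    (M N : ℕ) (hM : M = p ^ 2 * q ^ 2 * r ^ 2) (hN : N = p * q * r)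
    (A B : Finset (ZMod M))
    (htile : IsTiling M (A : Set (ZMod M)) (B : Set (ZMod M)))
    (hcardA : A.card = N) (hcardB : B.card = N)
    (a0 : ZMod M) (ha0 : a0 ∈ A)
    (hI : ∀ x ∈ A, (N : ZMod M) ∣ x - a0 → ∀ c, x + ((M / p : ℕ) : ZMod M) * c ∈ A)
    (hfq : ∀ c, a0 + ((M / q : ℕ) : ZMod M) * c ∈ A)
    (hfr : ∀ c, a0 + ((M / r : ℕ) : ZMod M) * c ∈ A)
    (hfib : ∀ a ∈ A, (∀ c, a + ((M / p : ℕ) : ZMod M) * c ∈ A) ∨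
      (∀ c, a + ((M / q : ℕ) : ZMod M) * c ∈ A) ∨ (∀ c, a + ((M / r : ℕ) : ZMod M) * c ∈ A)) :
    IsTiling M (gridSet M a0 N) (B : Set (ZMod M)) ∧
      SatisfiesT2 M A ∧ SatisfiesT2 M B := by
  have hp0 := hp.pos
  have hq0 := hq.pos
  have hr0 := hr.pos
  have cpq := (Nat.coprime_primes hp hq).2 hpq
  have cpr := (Nat.coprime_primes hp hr).2 hpr
  have cqr := (Nat.coprime_primes hq hr).2 hqr
  have hMpos : 0 < M := by rw [hM]; positivity
  have hNpos : 0 < N := by rw [hN]; positivity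
  have : NeZero M := ⟨hMpos.ne'⟩
  have : NeZero N := ⟨hNpos.ne'⟩
  have hMp : M / p = p * q ^ 2 * r ^ 2 :=
    Nat.div_eq_of_eq_mul_right hp0 (by rw [hM]; ring)
  have hMq : M / q = p ^ 2 * q * r ^ 2 :=
    Nat.div_eq_of_eq_mul_right hq0 (by rw [hM]; ring)
  have hMr : M / r = p ^ 2 * q ^ 2 * r :=
    Nat.div_eq_of_eq_mul_right hr0 (by rw [hM]; ring)
  have hMp' : M = p * (M / p) := by rw [hMp, hM]; ring
  have hMq' : M = q * (M / q) := by rw [hMq, hM]; ring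
  have hMr' : M = r * (M / r) := by rw [hMr, hM]; ring
  have eα : ((M / p : ℕ) : ZMod M) = N * (q * r : ℕ) := by
    rw [hMp, ← Nat.cast_mul, hN]; congr 1; ring
  have eβ : ((M / q : ℕ) : ZMod M) = N * (p * r : ℕ) := by
    rw [hMq, ← Nat.cast_mul, hN]; congr 1; ring
  have eγ : ((M / r : ℕ) : ZMod M) = N * (p * q : ℕ) := by
    rw [hMr, ← Nat.cast_mul, hN]; congr 1; ring
  have hne : ∀ w l : ℕ, l.Prime → M = l * w → ((w : ℕ) : ZMod M) ≠ 0 := by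
    intro w l hl hw h0
    rw [ZMod.natCast_eq_zero_iff] at h0
    have hw0 : 0 < w := by
      rcases Nat.eq_zero_or_pos w with h | h
      · rw [h] at hw; omega
      · exact h
    have h1 := Nat.le_of_dvd hw0 h0
    have := hl.two_le
    nlinarith
  have hβ0 := hne _ q hq hMq'
  have hγ0 := hne _ r hr hMr'
  have hxu := exists_scale hp hq hpq hMq'
  have hyu := exists_scale hp hr hpr hMr'
  have hNM : N ∣ M := ⟨N, by rw [hM, hN]; ring⟩
  -- decomposition of multiples of `N`
  have hdec : ∀ z : ZMod M, (N : ZMod M) ∣ z → ∃ c1 c2 c3 : ZMod M,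
      z = ((M / p : ℕ) : ZMod M) * c1 + ((M / q : ℕ) : ZMod M) * c2
        + ((M / r : ℕ) : ZMod M) * c3 := by
    rintro z ⟨y, rfl⟩
    have h1 : IsCoprime ((q * r : ℕ) : ℤ) (p : ℤ) :=
      Nat.isCoprime_iff_coprime.2 (Nat.Coprime.mul_left cpq.symm cpr.symm)
    have h2 : IsCoprime (r : ℤ) (q : ℤ) := Nat.isCoprime_iff_coprime.2 cqr.symm
    obtain ⟨u, v, huv⟩ := h1
    obtain ⟨u', v', huv'⟩ := h2
    refine ⟨u * y, v * u' * y, v * v' * y, ?_⟩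
    have h3 := congrArg (Int.cast : ℤ → ZMod M) huv
    have h4 := congrArg (Int.cast : ℤ → ZMod M) huv'
    push_cast at h3 h4
    rw [eα, eβ, eγ]
    push_cast
    linear_combination (-(N : ZMod M) * y) * h3 - (N : ZMod M) * y * v * p * h4
  have hplane_q : ∀ c1 c2 : ZMod M,
      a0 + ((M / q : ℕ) : ZMod M) * c2 + ((M / p : ℕ) : ZMod M) * c1 ∈ A := by
    intro c1 c2
    refine hI _ (hfq c2) ?_ c1
    rw [eβ]
    exact ⟨(p * r : ℕ) * c2, by ring⟩
  have hplane_r : ∀ c1 c3 : ZMod M,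
      a0 + ((M / r : ℕ) : ZMod M) * c3 + ((M / p : ℕ) : ZMod M) * c1 ∈ A := by
    intro c1 c3
    refine hI _ (hfr c3) ?_ c1
    rw [eγ]
    exact ⟨(p * q : ℕ) * c3, by ring⟩
  -- `B` has distinct residues mod `N`
  have hBinj : ∀ b ∈ B, ∀ b' ∈ B, (N : ZMod M) ∣ b - b' → b = b' := by
    intro b hb b' hb' hd
    obtain ⟨c1, c2, c3, e⟩ := hdec _ hd
    have h1 := htile.uniq (hplane_q c1 c2) (hfr (-c3)) hb' hb (by
      linear_combination -e)
    exact h1.2.symm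
  have hBsurj : ∀ z : ZMod M, ∃ b ∈ B, (N : ZMod M) ∣ z - b := by
    intro z
    have hinj : Set.InjOn (ZMod.castHom hNM (ZMod N)) (B : Set (ZMod M)) := by
      intro b hb b' hb' e
      exact hBinj b hb b' hb' ((natCast_dvd_zmod hNM b b').2 e)
    have him : B.image (ZMod.castHom hNM (ZMod N)) = Finset.univ := by
      apply Finset.eq_univ_of_card
      rw [Finset.card_image_of_injOn hinj, hcardB, ZMod.card]
    have hz : ZMod.castHom hNM (ZMod N) z ∈ B.image (ZMod.castHom hNM (ZMod N)) := by
      rw [him]; exact Finset.mem_univ _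
    obtain ⟨b, hb, e⟩ := Finset.mem_image.1 hz
    exact ⟨b, hb, (natCast_dvd_zmod hNM z b).2 e.symm⟩
  have hgrid : IsTiling M (gridSet M a0 N) (B : Set (ZMod M)) := by
    refine IsTiling.mk' ?_ ?_
    · intro z
      obtain ⟨b, hb, hd⟩ := hBsurj (z - a0)
      refine ⟨z - b, ?_, b, hb, by ring⟩
      change (N : ZMod M) ∣ z - b - a0
      convert hd using 1
      ring
    · intro x hx x' hx' b hb b' hb' e
      have hx : (N : ZMod M) ∣ x - a0 := hx
      have hx' : (N : ZMod M) ∣ x' - a0 := hx'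
      have h1 : b = b' := by
        apply hBinj b hb b' hb'
        have := dvd_sub hx' hx
        convert this using 1
        linear_combination e
      subst h1
      exact ⟨by simpa using e, rfl⟩
  -- `A` is fibered in the `p` direction
  have hAper : ∀ a ∈ A, ∀ c, a + ((M / p : ℕ) : ZMod M) * c ∈ A := by
    intro a ha
    obtain ⟨_, _, b, hb, _⟩ := htile.ex 0
    obtain ⟨b', hb', hd⟩ := hBsurj (a0 + b - a)
    obtain ⟨c1, c2, c3, e⟩ := hdec _ hd
    rcases hfib a ha with h | h | h
    · exact h
    · have h1 := htile.uniq (hplane_r (-c1) (-c3)) (h c2) hb hb' (by linear_combination e)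
      refine hI a ha ?_
      have h2 : a - a0 = N * ((p * q : ℕ) * (-c3) + (q * r : ℕ) * (-c1) - (p * r : ℕ) * c2) := by
        have := h1.1
        rw [eα, eβ, eγ] at this
        linear_combination -this
      exact ⟨_, h2⟩
    · have h1 := htile.uniq (hplane_q (-c1) (-c2)) (h c3) hb hb' (by linear_combination e)
      refine hI a ha ?_
      have h2 : a - a0 = N * ((p * r : ℕ) * (-c2) + (q * r : ℕ) * (-c1) - (p * q : ℕ) * c3) := by
        have := h1.1
        rw [eα, eβ, eγ] at this
        linear_combination -this
      exact ⟨_, h2⟩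
  -- cyclotomic divisors of `B`
  have hBcyc : ∀ s, s ∣ N → s ≠ 1 → cycDvd M s B := by
    classical
    intro s hs hs1
    obtain ⟨t, ht⟩ := exists_order (hs.trans hNM)
    rw [← ht, cycDvd_iff]
    have ht0 : t ≠ 0 := by
      rintro rfl
      rw [addOrderOf_zero] at ht
      exact hs1 ht.symm
    let L : Finset (ZMod M) := Finset.univ.filter (fun z => z ∈ gridSet M a0 N)
    have hL : (L : Set (ZMod M)) = gridSet M a0 N := by ext z; simp [L]
    have h1 := (hL ▸ hgrid : IsTiling M (L : Set (ZMod M)) B).hat_mul ht0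
    have htN : (N : ZMod M) * t = 0 := by
      rw [← nsmul_eq_mul, ← addOrderOf_dvd_iff_nsmul_eq_zero, ht]; exact hs
    have h2 : hatSum L t = L.card * ZMod.stdAddChar (t * a0) := by
      unfold hatSum
      rw [Finset.sum_congr rfl (g := fun _ => (ZMod.stdAddChar (t * a0) : ℂ)), Finset.sum_const,
        nsmul_eq_mul]
      intro z hz
      have hz : (N : ZMod M) ∣ z - a0 := (Finset.mem_filter.1 hz).2
      obtain ⟨c, hc⟩ := hz
      congr 1
      linear_combination t * hc + c * htN
    refine (mul_eq_zero.1 h1).resolve_left ?_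
    rw [h2]
    refine mul_ne_zero ?_ ?_
    · have : a0 ∈ L := Finset.mem_filter.2 ⟨Finset.mem_univ _, 0, by ring⟩
      exact_mod_cast (Finset.card_pos.2 ⟨a0, this⟩).ne'
    · rw [← norm_ne_zero_iff, AddChar.norm_apply]; norm_num
  -- prime powers
  have hprimes : ∀ x e : ℕ, x.Prime → 1 ≤ e → x ^ e ∣ M →
      (x = p ∨ x = q ∨ x = r) ∧ (e = 1 ∨ e = 2) := by
    intro x e hx he hd
    have h1 : x ∣ M := (dvd_pow_self x (by omega)).trans hd
    have h2 : x = p ∨ x = q ∨ x = r := by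
      rw [hM, hx.dvd_mul, hx.dvd_mul] at h1
      rcases h1 with (h1 | h1) | h1
      · exact Or.inl ((Nat.prime_dvd_prime_iff_eq hx hp).1 (hx.dvd_of_dvd_pow h1))
      · exact Or.inr (Or.inl ((Nat.prime_dvd_prime_iff_eq hx hq).1 (hx.dvd_of_dvd_pow h1)))
      · exact Or.inr (Or.inr ((Nat.prime_dvd_prime_iff_eq hx hr).1 (hx.dvd_of_dvd_pow h1)))
    refine ⟨h2, ?_⟩
    by_contra hcon
    have h3 : 3 ≤ e := by omega
    have h4 : x ^ 3 ∣ M := (pow_dvd_pow x h3).trans hd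
    have key : ∀ y z : ℕ, x.Coprime y → x.Coprime z → M = x ^ 2 * (y ^ 2 * z ^ 2) → False := by
      intro y z hy hz hh
      rw [hh, pow_succ] at h4
      have h5 := Nat.dvd_of_mul_dvd_mul_left (pow_pos hx.pos 2) h4
      have h6 : x.Coprime (y ^ 2 * z ^ 2) := (hy.pow_right 2).mul_right (hz.pow_right 2)
      exact hx.one_lt.ne' (Nat.eq_one_of_dvd_coprimes h6 dvd_rfl h5)
    rcases h2 with rfl | rfl | rfl
    · exact key q r cpq cpr (by rw [hM]; ring)
    · exact key p r cpq.symm cqr (by rw [hM]; ring)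
    · exact key p q cpr.symm cqr.symm (by rw [hM]; ring)
  have hsq : ∀ x, (x = p ∨ x = q ∨ x = r) → x.Prime ∧ x ∣ N ∧ x ^ 2 ∣ M ∧ ¬ x ^ 2 ∣ N := by
    intro x hx
    have key : ∀ y z : ℕ, x.Prime → x.Coprime y → x.Coprime z → N = x * (y * z) →
        ¬ x ^ 2 ∣ N := by
      intro y z hxp hy hz hh hd
      rw [hh, pow_two] at hd
      have h5 := Nat.dvd_of_mul_dvd_mul_left hxp.pos hd
      exact hxp.one_lt.ne' (Nat.eq_one_of_dvd_coprimes (hy.mul_right hz) dvd_rfl h5)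
    rcases hx with rfl | rfl | rfl
    · exact ⟨hp, ⟨q * r, by rw [hN]; ring⟩, ⟨q ^ 2 * r ^ 2, by rw [hM]; ring⟩,
        key q r hp cpq cpr (by rw [hN]; ring)⟩
    · exact ⟨hq, ⟨p * r, by rw [hN]; ring⟩, ⟨p ^ 2 * r ^ 2, by rw [hM]; ring⟩,
        key p r hq cpq.symm cqr (by rw [hN]; ring)⟩
    · exact ⟨hr, ⟨p * q, by rw [hN]; ring⟩, ⟨p ^ 2 * q ^ 2, by rw [hM]; ring⟩,
        key p q hr cpr.symm cqr.symm (by rw [hN]; ring)⟩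
  have hBsq : ∀ x, (x = p ∨ x = q ∨ x = r) → ¬ cycDvd M (x ^ 2) B := by
    intro x hx h2
    obtain ⟨hxp, hxN, _, hx2⟩ := hsq x hx
    have := sq_dvd_card hxp B (hBcyc x hxN hxp.one_lt.ne') h2
    rw [hcardB] at this
    exact hx2 this
  have hAsq : ∀ x, (x = p ∨ x = q ∨ x = r) → cycDvd M (x ^ 2) A := by
    intro x hx
    obtain ⟨hxp, hxN, hxM, hx2⟩ := hsq x hx
    obtain ⟨t, ht⟩ := exists_order hxM
    have hb := hBsq x hx
    rw [← ht, cycDvd_iff] at hb ⊢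
    have ht0 : t ≠ 0 := by
      rintro rfl
      rw [addOrderOf_zero] at ht
      have := hxp.one_lt
      nlinarith
    exact (mul_eq_zero.1 (htile.hat_mul ht0)).resolve_right hb
  have hA1 : ∀ x, (x = p ∨ x = q ∨ x = r) → ¬ cycDvd M x A := by
    intro x hx h1
    obtain ⟨hxp, hxN, _, hx2⟩ := hsq x hx
    have := sq_dvd_card hxp A h1 (hAsq x hx)
    rw [hcardA] at this
    exact hx2 this
  -- the mixed cyclotomic divisor
  have hmix : cycDvd M (q ^ 2 * r ^ 2) A := by
    by_contra hcon
    have hpN : ¬ p ∣ q * r := by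
      intro hd
      exact hp.one_lt.ne' (Nat.eq_one_of_dvd_coprimes (cpq.mul_right cpr) dvd_rfl hd)
    refine two_dir_contra hp hMp' htile hAper (m' := q * r) (by rw [hcardA, hN]; ring) hpN
      hfq hfr hβ0 hγ0 hxu hyu ?_
    intro t htx hty h0
    apply hcon
    have hord : addOrderOf ((p : ZMod M) * (p * t)) = q ^ 2 * r ^ 2 := by
      apply addOrderOf_eq_of_nsmul_and_div_prime_nsmul (by positivity)
      · have hM0 : ((p ^ 2 * q ^ 2 * r ^ 2 : ℕ) : ZMod M) = 0 := by rw [← hM]; simp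
        push_cast at hM0
        rw [nsmul_eq_mul]
        push_cast
        linear_combination t * hM0
      · intro l hl hld h1
        rw [hl.dvd_mul] at hld
        rcases hld with hld | hld
        · have := (Nat.prime_dvd_prime_iff_eq hl hq).1 (hl.dvd_of_dvd_pow hld)
          subst this
          have h2 : l ^ 2 * r ^ 2 / l = l * r ^ 2 :=
            Nat.div_eq_of_eq_mul_right hl.pos (by ring)
          rw [h2, nsmul_eq_mul] at h1
          apply htx
          rw [hMq, ← h1]
          push_cast
          ring
        · have := (Nat.prime_dvd_prime_iff_eq hl hr).1 (hl.dvd_of_dvd_pow hld)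
          subst this
          have h2 : q ^ 2 * l ^ 2 / l = q ^ 2 * l :=
            Nat.div_eq_of_eq_mul_right hl.pos (by ring)
          rw [h2, nsmul_eq_mul] at h1
          apply hty
          rw [hMr, ← h1]
          push_cast
          ring
    rw [← hord, cycDvd_iff]
    exact h0
  refine ⟨hgrid, ?_, ?_⟩
  · intro P e hP hPe
    have hmem : ∀ x ∈ P, (x = p ∨ x = q ∨ x = r) ∧ e x = 2 := by
      intro x hx
      obtain ⟨h1, h2, h3, h4⟩ := hPe x hx
      obtain ⟨h5, h6⟩ := hprimes x (e x) h1 h2 h3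
      refine ⟨h5, h6.resolve_left fun h7 => hA1 x h5 ?_⟩
      rwa [h7, pow_one] at h4
    have hprod : ∏ x ∈ P, x ^ e x = ∏ x ∈ P, x ^ 2 :=
      Finset.prod_congr rfl fun x hx => by rw [(hmem x hx).2]
    rw [hprod]
    by_cases hpP : p ∈ P
    · have hsub : P ⊆ {p, q, r} := by
        intro x hx
        simpa using (hmem x hx).1
      have hdM : ∏ x ∈ P, x ^ 2 ∣ M := by
        refine (Finset.prod_dvd_prod_of_subset _ _ _ hsub).trans ?_
        rw [Finset.prod_insert (by simp [hpq, hpr]), Finset.prod_insert (by simp [hqr]),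
          Finset.prod_singleton, hM, mul_assoc]
      obtain ⟨t, ht⟩ := exists_order hdM
      rw [← ht, cycDvd_iff]
      refine hatSum_periodic hAper ?_
      intro h0
      have h1 : addOrderOf t ∣ M / p := by
        rw [addOrderOf_dvd_iff_nsmul_eq_zero, nsmul_eq_mul, mul_comm]; exact h0
      have h2 : p ^ 2 ∣ M / p := by
        refine dvd_trans ?_ h1
        rw [ht]
        exact Finset.dvd_prod_of_mem (fun x => x ^ 2) hpP
      rw [hMp, mul_assoc, pow_two] at h2
      have h3 := Nat.dvd_of_mul_dvd_mul_left hp0 h2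
      exact hp.one_lt.ne' (Nat.eq_one_of_dvd_coprimes
        ((cpq.pow_right 2).mul_right (cpr.pow_right 2)) dvd_rfl h3)
    · by_cases hqP : q ∈ P
      · by_cases hrP : r ∈ P
        · have : P = {q, r} := by
            ext x
            simp only [Finset.mem_insert, Finset.mem_singleton]
            constructor
            · intro hx
              rcases (hmem x hx).1 with rfl | h | h
              · exact absurd hx hpP
              · exact Or.inl h
              · exact Or.inr h
            · rintro (rfl | rfl) <;> assumption
          rw [this, Finset.prod_pair hqr]
          exact hmix
        · have : P = {q} := by
            ext x
            simp only [Finset.mem_singleton]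
            constructor
            · intro hx
              rcases (hmem x hx).1 with rfl | h | rfl
              · exact absurd hx hpP
              · exact h
              · exact absurd hx hrP
            · rintro rfl; assumption
          rw [this, Finset.prod_singleton]
          exact hAsq q (by simp)
      · have : P = {r} := by
          refine Finset.eq_singleton_iff_nonempty_unique_mem.2 ⟨hP, ?_⟩
          intro x hx
          rcases (hmem x hx).1 with rfl | rfl | h
          · exact absurd hx hpP
          · exact absurd hx hqP
          · exact h
        rw [this, Finset.prod_singleton]
        exact hAsq r (by simp)
  · intro P e hP hPe
    have hmem : ∀ x ∈ P, (x = p ∨ x = q ∨ x = r) ∧ e x = 1 := by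
      intro x hx
      obtain ⟨h1, h2, h3, h4⟩ := hPe x hx
      obtain ⟨h5, h6⟩ := hprimes x (e x) h1 h2 h3
      refine ⟨h5, h6.resolve_right fun h7 => hBsq x h5 ?_⟩
      rwa [h7] at h4
    have hprod : ∏ x ∈ P, x ^ e x = ∏ x ∈ P, x :=
      Finset.prod_congr rfl fun x hx => by rw [(hmem x hx).2, pow_one]
    rw [hprod]
    apply hBcyc
    · exact Finset.prod_primes_dvd N (fun x hx => (hPe x hx).1.prime)
        (fun x hx => (hsq x (hmem x hx).1).2.1)
    · intro h1
      obtain ⟨x, hx⟩ := hP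
      have h2 : x ∣ 1 := h1 ▸ Finset.dvd_prod_of_mem (fun x => x) hx
      exact (hPe x hx).1.one_lt.ne' (Nat.dvd_one.1 h2)

lemma fibered_mem {M p N : ℕ} {A : Finset (ZMod M)} {a : ZMod M}
    (h : Fibered M p ((A : Set (ZMod M)) ∩ gridSet M a N)) :
    ∀ x ∈ A, (N : ZMod M) ∣ x - a → ∀ c, x + ((M / p : ℕ) : ZMod M) * c ∈ A := by
  intro x hx hd c
  have : x + ((M / p : ℕ) : ZMod M) * c ∈ gridSet M x (M / p) := ⟨c, by ring⟩
  exact (h x ⟨hx, hd⟩ this).1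

lemma grid_mem {M p : ℕ} {A : Finset (ZMod M)} {a : ZMod M}
    (h : gridSet M a (M / p) ⊆ (A : Set (ZMod M))) :
    ∀ c, a + ((M / p : ℕ) : ZMod M) * c ∈ A := by
  intro c
  exact h ⟨c, by ring⟩

/-- Fibered grid case with a triply-fibered point: if `A ⊕ B = ℤ_M`,
`|A| = |B| = p_i p_j p_k`, `Φ_M | A`, every set `A ∩ Λ(a, D(M))` (`a ∈ A`) is `M`-fibered in
at least one direction, and there exists `a₀ ∈ A` with `a₀∗F_ν ⊆ A` for all `ν ∈ {i,j,k}`,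
then `Λ(a₀, D(M)) ⊕ B = ℤ_M` is also a tiling and both `A`, `B` satisfy (T2). -/
theorem statement3
    (pi pj pk : ℕ) (hpi : pi.Prime) (hpj : pj.Prime) (hpk : pk.Prime)
    (hoi : Odd pi) (hoj : Odd pj) (hok : Odd pk)
    (hij : pi ≠ pj) (hik : pi ≠ pk) (hjk : pj ≠ pk)
    (M : ℕ) (hM : M = pi ^ 2 * pj ^ 2 * pk ^ 2)
    (A B : Finset (ZMod M))
    (htile : IsTiling M (A : Set (ZMod M)) (B : Set (ZMod M)))
    (hcardA : A.card = pi * pj * pk) (hcardB : B.card = pi * pj * pk)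
    (hPhiM : cycDvd M M A)
    (hfib : ∀ a ∈ A,
      Fibered M pi ((A : Set (ZMod M)) ∩ gridSet M a (pi * pj * pk)) ∨
      Fibered M pj ((A : Set (ZMod M)) ∩ gridSet M a (pi * pj * pk)) ∨
      Fibered M pk ((A : Set (ZMod M)) ∩ gridSet M a (pi * pj * pk)))
    (a0 : ZMod M) (ha0 : a0 ∈ A)
    (hfi : gridSet M a0 (M / pi) ⊆ (A : Set (ZMod M)))
    (hfj : gridSet M a0 (M / pj) ⊆ (A : Set (ZMod M)))
    (hfk : gridSet M a0 (M / pk) ⊆ (A : Set (ZMod M))) :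
    IsTiling M (gridSet M a0 (pi * pj * pk)) (B : Set (ZMod M)) ∧
      SatisfiesT2 M A ∧ SatisfiesT2 M B := by
  have hfib' : ∀ a ∈ A, (∀ c, a + ((M / pi : ℕ) : ZMod M) * c ∈ A) ∨
      (∀ c, a + ((M / pj : ℕ) : ZMod M) * c ∈ A) ∨
      (∀ c, a + ((M / pk : ℕ) : ZMod M) * c ∈ A) := by
    intro a ha
    rcases hfib a ha with h | h | h
    · exact Or.inl (fibered_mem h a ha (by simp))
    · exact Or.inr (Or.inl (fibered_mem h a ha (by simp)))
    · exact Or.inr (Or.inr (fibered_mem h a ha (by simp)))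
  rcases hfib a0 ha0 with h | h | h
  · exact core pi pj pk hpi hpj hpk hij hik hjk M _ hM rfl A B htile hcardA hcardB a0 ha0
      (fibered_mem h) (grid_mem hfj) (grid_mem hfk) hfib'
  · refine core pj pi pk hpj hpi hpk hij.symm hjk hik M _ (by rw [hM]; ring) (by ring) A B htile
      hcardA hcardB a0 ha0 (fibered_mem h) (grid_mem hfi) (grid_mem hfk) ?_
    intro a ha
    rcases hfib' a ha with h | h | h
    · exact Or.inr (Or.inl h)
    · exact Or.inl h
    · exact Or.inr (Or.inr h)
  · refine core pk pi pj hpk hpi hpj hik.symm hjk.symm hij M _ (by rw [hM]; ring) (by ring) A B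
      htile hcardA hcardB a0 ha0 (fibered_mem h) (grid_mem hfi) (grid_mem hfj) ?_
    intro a ha
    rcases hfib' a ha with h | h | h
    · exact Or.inr (Or.inl h)
    · exact Or.inr (Or.inr h)
    · exact Or.inl h
end

section
/- Let M = p_i^{n_i} p_j^{n_j} p_k^{n_k} with p_i, p_j, p_k distinct primes, and let A ⊕ B = ℤ_M. Assume that no divisor m of M with D(M) | m and m ≠ M belongs to Div(B) (equivalently, every D(M)-grid contains at most one element of B). Suppose x ∈ ℤ_M and there exist a_i, a_j, a_k ∈ A with (x−a_i, M) = M/p_i, (x−a_j, M) = M/p_j, and (x−a_k, M) = M/p_k. Then x ∈ A. -/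
open Polynomial

section helpers

open AddMonoidAlgebra in
theorem tiling_dilate_prime {G ι κ : Type} [AddCommGroup G] [Fintype G] [DecidableEq G]
    [Fintype ι] [Fintype κ] (f : ι → G) (g : κ → G)
    (h : Function.Bijective (fun t : ι × κ => f t.1 + g t.2)) (p : ℕ) (hp : p.Prime)
    (hpG : Nat.Coprime p (Fintype.card G)) :
    Function.Bijective (fun t : ι × κ => p • f t.1 + g t.2) := by
  have : Fact p.Prime := ⟨hp⟩
  have hcard : Fintype.card (ι × κ) = Fintype.card G := Fintype.card_of_bijective h
  let R := AddMonoidAlgebra (ZMod p) G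
  have : CharP R p := charP_of_injective_algebraMap (algebraMap (ZMod p) R).injective p
  let e : G → R := fun z => AddMonoidAlgebra.single z 1
  have he : ∀ a b, e a * e b = e (a + b) := by
    intro a b
    exact (AddMonoidAlgebra.single_mul_single ..).trans (by rw [one_mul])
  have hep : ∀ a, ∀ n : ℕ, e a ^ n = e (n • a) := by
    intro a n
    exact (AddMonoidAlgebra.single_pow ..).trans (by rw [one_pow])
  set α : R := ∑ i, e (f i) with hα
  set β : R := ∑ j, e (g j) with hβ
  set γ : R := ∑ z, e z with hγ
  have h1 : α * β = γ := by
    rw [hα, hβ, Finset.sum_mul_sum, ← Finset.sum_product', Finset.univ_product_univ, hγ]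
    simp only [he]
    exact Function.Bijective.sum_comp h e
  have h2 : ∀ a, e a * γ = γ := by
    intro a
    rw [hγ, Finset.mul_sum]
    simp only [he]
    exact Function.Bijective.sum_comp (Equiv.addLeft a).bijective e
  have h3 : α * γ = (Fintype.card ι : ZMod p) • γ := by
    rw [hα, Finset.sum_mul]
    simp only [h2]
    rw [Finset.sum_const, Finset.card_univ, ← Nat.cast_smul_eq_nsmul (ZMod p)]
  have h4 : ∀ n : ℕ, α ^ n * γ = ((Fintype.card ι : ZMod p) ^ n) • γ := by
    intro n
    induction n with
    | zero => simp
    | succ k ih => rw [pow_succ, mul_assoc, h3, mul_smul_comm, ih, smul_smul, pow_succ, mul_comm]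
  have hne : (Fintype.card ι : ZMod p) ≠ 0 := by
    intro h0
    rw [ZMod.natCast_eq_zero_iff] at h0
    have : p ∣ Fintype.card G := by
      rw [← hcard, Fintype.card_prod]
      exact Dvd.dvd.mul_right h0 _
    exact hp.one_lt.ne' (Nat.eq_one_of_dvd_coprimes hpG dvd_rfl this)
  have h5 : α ^ p * β = γ := by
    obtain ⟨k, hk⟩ : ∃ k, p = k + 1 := ⟨p - 1, by have := hp.pos; omega⟩
    have hF : (Fintype.card ι : ZMod p) ^ (p - 1) = 1 := ZMod.pow_card_sub_one_eq_one hne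
    have : α ^ p = α ^ (p - 1) * α := by
      rw [← pow_succ, Nat.sub_add_cancel hp.pos]
    rw [this, mul_assoc, h1, h4, hF, one_smul]
  have h6 : α ^ p = ∑ i, e (p • f i) := by
    rw [hα, sum_pow_char]
    simp only [hep]
  have h7 : ∑ t : ι × κ, e (p • f t.1 + g t.2) = γ := by
    rw [← h5, h6, hβ, Finset.sum_mul_sum, ← Finset.sum_product', Finset.univ_product_univ]
    simp only [he]
  have hsurj : Function.Surjective (fun t : ι × κ => p • f t.1 + g t.2) := by
    intro z
    by_contra hz
    push Not at hz
    have h8 := congrArg (fun w : AddMonoidAlgebra (ZMod p) G => w.coeff z) h7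
    simp only [hγ, e] at h8
    rw [AddMonoidAlgebra.coeff_sum, AddMonoidAlgebra.coeff_sum, Finsupp.finsetSum_apply,
      Finsupp.finsetSum_apply] at h8
    simp only [AddMonoidAlgebra.coeff_single, Finsupp.single_apply] at h8
    rw [Finset.sum_eq_zero (fun t _ => if_neg (hz t))] at h8
    simp at h8
  exact (Fintype.bijective_iff_surjective_and_card _).2 ⟨hsurj, hcard⟩

theorem tiling_dilate {G ι κ : Type} [AddCommGroup G] [Fintype G] [DecidableEq G]
    [Fintype ι] [Fintype κ] (g : κ → G) (n : ℕ) :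
    ∀ (f : ι → G), Function.Bijective (fun t : ι × κ => f t.1 + g t.2) →
    Nat.Coprime n (Fintype.card G) →
    Function.Bijective (fun t : ι × κ => n • f t.1 + g t.2) := by
  induction n using Nat.recOnMul with
  | zero =>
    intro f h hc
    have h1 : Fintype.card G = 1 := by simpa using hc
    have : Subsingleton G := Fintype.card_le_one_iff_subsingleton.1 h1.le
    convert h using 2
  | one => intro f h _; simpa using h
  | prime p hp => intro f h hc; exact tiling_dilate_prime f g h p hp hc
  | mul a b iha ihb =>
    intro f h hc
    have h1 := ihb f h (Nat.Coprime.coprime_mul_left hc)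
    have h2 := iha (fun i => b • f i) h1 (Nat.Coprime.coprime_mul_right hc)
    simpa [mul_smul] using h2

theorem exists_unit_of_gcd_eq (M : ℕ) [NeZero M] (u v : ZMod M)
    (h : Nat.gcd u.val M = Nat.gcd v.val M) : ∃ r : (ZMod M)ˣ, u = r * v := by
  have hM : 0 < M := Nat.pos_of_ne_zero (NeZero.ne M)
  have hg : 0 < Nat.gcd u.val M := Nat.gcd_pos_of_pos_right _ hM
  obtain ⟨u', hu'⟩ := Nat.gcd_dvd_left u.val M
  obtain ⟨m, hm⟩ := Nat.gcd_dvd_right u.val M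
  obtain ⟨v', hv'⟩ := Nat.gcd_dvd_left v.val M
  rw [← h] at hv'
  have cu : Nat.Coprime u' m := by
    have := Nat.coprime_div_gcd_div_gcd hg
    rwa [Nat.div_eq_of_eq_mul_right hg hu', Nat.div_eq_of_eq_mul_right hg hm] at this
  have cv : Nat.Coprime v' m := by
    have hg' := hg
    rw [h] at hg'
    have := Nat.coprime_div_gcd_div_gcd hg'
    rw [← h] at this
    rwa [Nat.div_eq_of_eq_mul_right hg hv', Nat.div_eq_of_eq_mul_right hg hm] at this
  have hmM : m ∣ M := ⟨_, hm.trans (mul_comm _ _)⟩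
  obtain ⟨r, hr⟩ := ZMod.unitsMap_surjective hmM
    (ZMod.unitOfCoprime u' cu * (ZMod.unitOfCoprime v' cv)⁻¹)
  refine ⟨r, ?_⟩
  have h1 : ((r : ZMod M).val : ZMod m) * (v' : ZMod m) = (u' : ZMod m) := by
    have h2 : ZMod.unitsMap hmM r * ZMod.unitOfCoprime v' cv = ZMod.unitOfCoprime u' cu := by
      rw [hr]; simp
    have h3 := congrArg Units.val h2
    simpa [ZMod.unitsMap_def, ZMod.natCast_val] using h3
  rw [← Nat.cast_mul, ZMod.natCast_eq_natCast_iff] at h1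
  have h4 := Nat.ModEq.mul_left' (u.val.gcd M) h1
  rw [← hm] at h4
  have h5 : ((u.val.gcd M * ((r : ZMod M).val * v') : ℕ) : ZMod M) = ((u.val.gcd M * u' : ℕ) : ZMod M) :=
    (ZMod.natCast_eq_natCast_iff _ _ _).2 h4
  rw [← hu'] at h5
  have h6 : u.val.gcd M * ((r : ZMod M).val * v') = (r : ZMod M).val * v.val := by
    rw [hv']
    ring_nf
  rw [h6] at h5
  simpa using h5.symm

theorem dvd_aux (p n q d : ℕ) (hp : p.Prime) (hn : 1 ≤ n) (hd : d ∣ p ^ n * q)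
    (h : ¬ p ^ (n - 1) ∣ d) : d ∣ p ^ (n - 1) * q := by
  obtain ⟨a, b, ha, hb, rfl⟩ := exists_dvd_and_dvd_of_dvd_mul hd
  obtain ⟨e, he, rfl⟩ := (Nat.dvd_prime_pow hp).1 ha
  have : e ≤ n - 1 := by
    by_contra hc
    exact h (Dvd.dvd.mul_right (pow_dvd_pow p (by omega)) b)
  exact mul_dvd_mul (pow_dvd_pow p this) hb

theorem dvd_val_iff (M d : ℕ) [NeZero M] (hd : d ∣ M) (w : ZMod M) :
    d ∣ w.val ↔ ZMod.castHom hd (ZMod d) w = 0 := by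
  rw [← ZMod.natCast_eq_zero_iff, ZMod.natCast_val, ZMod.castHom_apply]

theorem gcd_aux (M p n q : ℕ) [NeZero M] (hp : p.Prime) (hn : 1 ≤ n) (hM : M = p ^ n * q)
    (u t : ZMod M) (ht : p ^ (n - 1) * q ∣ t.val) (hu : ¬ p ^ (n - 1) ∣ u.val) :
    Nat.gcd (u - t).val M = Nat.gcd u.val M := by
  have key : ∀ w s : ZMod M, p ^ (n - 1) * q ∣ s.val → ¬ p ^ (n - 1) ∣ w.val →
      Nat.gcd w.val M ∣ Nat.gcd (w - s).val M := by
    intro w s hs hw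
    have hdM := Nat.gcd_dvd_right w.val M
    refine Nat.dvd_gcd ?_ hdM
    have h1 : Nat.gcd w.val M ∣ s.val := by
      refine (dvd_aux p n q _ hp hn (hM ▸ hdM) ?_).trans hs
      exact fun hc => hw (hc.trans (Nat.gcd_dvd_left _ _))
    have h0 := Nat.gcd_dvd_left w.val M
    rw [dvd_val_iff M _ hdM] at h1 h0 ⊢
    rw [map_sub, h1, h0, sub_zero]
  have hpM : p ^ (n - 1) ∣ M := by
    rw [hM]; exact Dvd.dvd.mul_right (pow_dvd_pow p (by omega)) q
  have hpt : p ^ (n - 1) ∣ t.val := (Dvd.intro _ rfl).trans ht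
  have hqM : p ^ (n - 1) * q ∣ M := by
    rw [hM]; exact mul_dvd_mul (pow_dvd_pow p (by omega)) dvd_rfl
  apply Nat.dvd_antisymm
  · have h2 := key (u - t) (-t) ?_ ?_
    · simpa using h2
    · rw [dvd_val_iff M _ hqM] at ht ⊢
      rw [map_neg, ht, neg_zero]
    · rw [dvd_val_iff M _ hpM] at hu hpt ⊢
      rwa [map_sub, hpt, sub_zero]
  · exact key u t ht hu

theorem key_lemma (M p n q : ℕ) [NeZero M] (hp : p.Prime) (hn : 1 ≤ n) (hM : M = p ^ n * q)
    (A B : Set (ZMod M))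
    (hA : ∀ r : (ZMod M)ˣ, Function.Bijective (fun t : B × A => (r : ZMod M) * t.1.1 + t.2.1))
    (x a a' b b' : ZMod M) (ha : a ∈ A) (ha' : a' ∈ A) (hb : b ∈ B) (hb' : b' ∈ B)
    (hx : x - a = b - b') (hg : Nat.gcd (x - a').val M = M / p)
    (hu : ¬ p ^ (n - 1) ∣ (x - a).val) : False := by
  have hMp : M / p = p ^ (n - 1) * q := by
    obtain ⟨k, rfl⟩ : ∃ k, n = k + 1 := ⟨n - 1, by omega⟩
    rw [hM, pow_succ, mul_right_comm, Nat.mul_div_cancel _ hp.pos, Nat.add_sub_cancel]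
  have ht : p ^ (n - 1) * q ∣ (x - a').val := by
    rw [← hMp, ← hg]; exact Nat.gcd_dvd_left _ _
  have h1 := gcd_aux M p n q hp hn hM (x - a) (x - a') ht hu
  obtain ⟨r, hr⟩ := exists_unit_of_gcd_eq M _ _ h1
  have h2 := (hA (-r)).1 (a₁ := (⟨b, hb⟩, ⟨a', ha'⟩)) (a₂ := (⟨b', hb'⟩, ⟨a, ha⟩)) (by
    simp only [Units.val_neg]
    rw [hx] at hr
    linear_combination hr + hx)
  have h3 : a' = a := by
    have := congrArg (fun t => (t.2 : ZMod M)) h2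
    simpa using this
  rw [h3] at ht
  exact hu ((Dvd.intro _ rfl).trans ht)

end helpers

/-- **No missing joints.** Let `M = p_i^{n_i} p_j^{n_j} p_k^{n_k}` and
`A ⊕ B = ℤ_M`. Assume no divisor `m` of `M` with `D(M) | m`, `m ≠ M`, lies in `Div(B)`.
If `x ∈ ℤ_M` admits `a_i, a_j, a_k ∈ A` with `(x - a_ν, M) = M/p_ν`, then `x ∈ A`. -/
theorem statement7
    (pi pj pk : ℕ) (hpi : pi.Prime) (hpj : pj.Prime) (hpk : pk.Prime)
    (hij : pi ≠ pj) (hik : pi ≠ pk) (hjk : pj ≠ pk)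
    (ni nj nk : ℕ) (hni : 1 ≤ ni) (hnj : 1 ≤ nj) (hnk : 1 ≤ nk)
    (M : ℕ) (hM : M = pi ^ ni * pj ^ nj * pk ^ nk)
    (A B : Set (ZMod M)) (htile : IsTiling M A B)
    (hdiv : ∀ m : ℕ, (pi ^ (ni - 1) * pj ^ (nj - 1) * pk ^ (nk - 1)) ∣ m → m ∣ M → m ≠ M →
      m ∉ DivSet M M B)
    (x : ZMod M) (ai aj ak : ZMod M)
    (hai : ai ∈ A) (haj : aj ∈ A) (hak : ak ∈ A)
    (hgi : Nat.gcd (x - ai).val M = M / pi)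
    (hgj : Nat.gcd (x - aj).val M = M / pj)
    (hgk : Nat.gcd (x - ak).val M = M / pk) :
    x ∈ A := by
  have hM0 : M ≠ 0 := by
    rw [hM]
    have := hpi.ne_zero
    have := hpj.ne_zero
    have := hpk.ne_zero
    positivity
  have : NeZero M := ⟨hM0⟩
  classical
  have : Fintype A := Fintype.ofFinite A
  have : Fintype B := Fintype.ofFinite B
  have hbij : Function.Bijective (fun t : B × A => t.1.1 + t.2.1) := by
    constructor
    · rintro ⟨⟨b, hb⟩, ⟨a, ha⟩⟩ ⟨⟨b', hb'⟩, ⟨a', ha'⟩⟩ h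
      have h' : b + a = b' + a' := h
      have := (htile (a + b)).unique (y₁ := (a, b)) (y₂ := (a', b')) ⟨ha, hb, rfl⟩
        ⟨ha', hb', by simp only; rw [add_comm a', add_comm a, h']⟩
      simp only [Prod.mk.injEq] at this
      simp [this.1, this.2]
    · intro z
      obtain ⟨⟨a, b⟩, ⟨ha, hb, hab⟩, _⟩ := htile z
      exact ⟨(⟨b, hb⟩, ⟨a, ha⟩), by simpa [add_comm] using hab⟩
  have hA : ∀ r : (ZMod M)ˣ,
      Function.Bijective (fun t : B × A => (r : ZMod M) * t.1.1 + t.2.1) := by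
    intro r
    have := tiling_dilate (fun a : A => a.1) (r : ZMod M).val (fun b : B => b.1) hbij
      (by rw [ZMod.card]; exact ZMod.val_coe_unit_coprime r)
    simpa [nsmul_eq_mul] using this
  by_contra hxA
  obtain ⟨⟨_, b⟩, ⟨_, hb, _⟩, _⟩ := htile 0
  obtain ⟨⟨⟨b', hb'⟩, ⟨a, ha⟩⟩, hab⟩ := (hA (-1)).2 (x - b)
  have hab' : -b' + a = x - b := by simpa using hab
  have hx : x - a = b - b' := by linear_combination -hab'
  have hi : pi ^ (ni - 1) ∣ (x - a).val := by
    by_contra hc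
    exact key_lemma M pi ni (pj ^ nj * pk ^ nk) hpi hni (by rw [hM]; ring) A B hA x a ai b b'
      ha hai hb hb' hx hgi hc
  have hj : pj ^ (nj - 1) ∣ (x - a).val := by
    by_contra hc
    exact key_lemma M pj nj (pi ^ ni * pk ^ nk) hpj hnj (by rw [hM]; ring) A B hA x a aj b b'
      ha haj hb hb' hx hgj hc
  have hk : pk ^ (nk - 1) ∣ (x - a).val := by
    by_contra hc
    exact key_lemma M pk nk (pi ^ ni * pj ^ nj) hpk hnk (by rw [hM]; ring) A B hA x a ak b b'
      ha hak hb hb' hx hgk hc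
  have cij : Nat.Coprime (pi ^ (ni - 1)) (pj ^ (nj - 1)) :=
    Nat.Coprime.pow _ _ ((Nat.coprime_primes hpi hpj).2 hij)
  have cik : Nat.Coprime (pi ^ (ni - 1)) (pk ^ (nk - 1)) :=
    Nat.Coprime.pow _ _ ((Nat.coprime_primes hpi hpk).2 hik)
  have cjk : Nat.Coprime (pj ^ (nj - 1)) (pk ^ (nk - 1)) :=
    Nat.Coprime.pow _ _ ((Nat.coprime_primes hpj hpk).2 hjk)
  have hD := Nat.Coprime.mul_dvd_of_dvd_of_dvd (Nat.Coprime.mul_left cik cjk)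
    (Nat.Coprime.mul_dvd_of_dvd_of_dvd cij hi hj) hk
  have hDM : pi ^ (ni - 1) * pj ^ (nj - 1) * pk ^ (nk - 1) ∣ M := by
    rw [hM]
    exact mul_dvd_mul (mul_dvd_mul (pow_dvd_pow _ (Nat.sub_le _ _)) (pow_dvd_pow _ (Nat.sub_le _ _)))
      (pow_dvd_pow _ (Nat.sub_le _ _))
  refine hdiv (Nat.gcd (x - a).val M) (Nat.dvd_gcd hD hDM) (Nat.gcd_dvd_right _ _) ?_
    ⟨b, hb, b', hb', by rw [hx]⟩
  intro hg
  have h1 : M ∣ (x - a).val := by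
    have := Nat.gcd_dvd_left (x - a).val M
    rwa [hg] at this
  have h2 := Nat.eq_zero_of_dvd_of_lt h1 (ZMod.val_lt _)
  rw [ZMod.val_eq_zero, sub_eq_zero] at h2
  exact hxA (h2 ▸ ha)
end

section
/- Let M = p_i^{n_i} p_j^{n_j} p_k^{n_k} with p_i, p_j, p_k distinct primes. Assume A ⊕ B = ℤ_M and Φ_M | A. Let Λ be a D(M)-grid such that A ∩ Λ cannot be written as a union of pairwise disjoint M-fibers (each fiber being in any of the three directions). Then A contains diagonal boxes on Λ, i.e., there is a nonempty box P ⊆ Λ whose complementary box P° is nonempty, with P ∪ P° ⊆ A. -/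
open Polynomial

/-- `P` is a box in the grid `Λ`, with respect to the equivalences `x ∼_ν y ↔ q_ν ∣ x - y`
(`q_ν = p_ν^{n_ν}`): it is contained in `Λ` and closed under taking "coordinatewise
combinations" of its elements. -/
def IsBox (M qi qj qk : ℕ) (Lam P : Set (ZMod M)) : Prop :=
  P ⊆ Lam ∧ ∀ u ∈ P, ∀ v ∈ P, ∀ w ∈ P, ∀ x ∈ Lam,
    (qi : ZMod M) ∣ (x - u) → (qj : ZMod M) ∣ (x - v) → (qk : ZMod M) ∣ (x - w) → x ∈ P

/-- The complementary box `P°` of `P` in `Λ`: elements of `Λ` which are not equivalent to any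
element of `P` in any of the three directions. -/
def compBox (M qi qj qk : ℕ) (Lam P : Set (ZMod M)) : Set (ZMod M) :=
  {x : ZMod M | x ∈ Lam ∧ ∀ u ∈ P,
    ¬ (qi : ZMod M) ∣ (x - u) ∧ ¬ (qj : ZMod M) ∣ (x - u) ∧ ¬ (qk : ZMod M) ∣ (x - u)}


/-- all alternating sums over the vertices of a cuboid vanish -/
def Cub {X Y Z : Type*} (f : X → Y → Z → ℤ) : Prop :=
  ∀ x x' y y' z z', f x y z - f x' y z - f x y' z - f x y z' + f x' y' z + f x' y z' + f x y' z'
    - f x' y' z' = 0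

theorem Cub.swap12 {X Y Z : Type*} {f : X → Y → Z → ℤ} (h : Cub f) :
    Cub (fun y x z => f x y z) := by
  intro y y' x x' z z'
  have := h x x' y y' z z'
  simp only
  linarith

theorem Cub.swap23 {X Y Z : Type*} {f : X → Y → Z → ℤ} (h : Cub f) :
    Cub (fun x z y => f x y z) := by
  intro x x' z z' y y'
  have := h x x' y y' z z'
  simp only
  linarith

def Zo {X Y Z : Type*} (f : X → Y → Z → ℤ) : Prop := ∀ x y z, f x y z = 0 ∨ f x y z = 1

/-- difference of two distinct slices -/
theorem slice_diff {X Y Z : Type*} {f : X → Y → Z → ℤ} (hc : Cub f) (h01 : Zo f)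
    (hx : ∀ y z, ∃ x, f x y z = 0) (hy : ∀ x z, ∃ y, f x y z = 0)
    (z z' : Z) (hne : ∃ x y, f x y z ≠ f x y z') :
    ∃ (α : X → ℤ) (β : Y → ℤ), (∀ x, α x = 0 ∨ α x = 1) ∧ (∀ y, β y = 0 ∨ β y = 1) ∧
      (∃ x, α x = 0) ∧ (∃ x, α x = 1) ∧ (∃ y, β y = 0) ∧ (∃ y, β y = 1) ∧
      ∀ x y, f x y z' - f x y z = α x - β y := by
  obtain ⟨g, hg⟩ : ∃ g : X → Y → ℤ, ∀ x y, g x y = f x y z' - f x y z := ⟨_, fun _ _ => rfl⟩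
  have hadd : ∀ x x' y y', g x y - g x' y - g x y' + g x' y' = 0 := by
    intro x x' y y'
    have := hc x x' y y' z z'
    simp only [hg]; linarith
  have hb : ∀ x y, -1 ≤ g x y ∧ g x y ≤ 1 := by
    intro x y
    rcases h01 x y z with h | h <;> rcases h01 x y z' with h' | h' <;> rw [hg, h, h'] <;> norm_num
  have hxp : ∀ y, ∃ x, g x y ≤ 0 := fun y => by
    obtain ⟨x, h⟩ := hx y z'
    refine ⟨x, ?_⟩
    rcases h01 x y z with h' | h' <;> rw [hg, h, h'] <;> norm_num
  have hxm : ∀ y, ∃ x, 0 ≤ g x y := fun y => by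
    obtain ⟨x, h⟩ := hx y z
    refine ⟨x, ?_⟩
    rcases h01 x y z' with h' | h' <;> rw [hg, h, h'] <;> norm_num
  have hyp : ∀ x, ∃ y, g x y ≤ 0 := fun x => by
    obtain ⟨y, h⟩ := hy x z'
    refine ⟨y, ?_⟩
    rcases h01 x y z with h' | h' <;> rw [hg, h, h'] <;> norm_num
  have hym : ∀ x, ∃ y, 0 ≤ g x y := fun x => by
    obtain ⟨y, h⟩ := hy x z
    refine ⟨y, ?_⟩
    rcases h01 x y z' with h' | h' <;> rw [hg, h, h'] <;> norm_num
  -- nonconstant in both directions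
  obtain ⟨xs, ys, hs⟩ := hne
  have key : ∃ x1 x0 y1 y0, g x0 ys < g x1 ys ∧ g xs y0 < g xs y1 := by
    have h1 := hb xs ys
    rcases h01 xs ys z with h | h <;> rcases h01 xs ys z' with h' | h'
    · exact absurd (h.trans h'.symm) hs
    · obtain ⟨x0, hx0⟩ := hxp ys
      obtain ⟨y0, hy0⟩ := hyp xs
      have : g xs ys = 1 := by rw [hg, h, h']; norm_num
      exact ⟨xs, x0, ys, y0, by omega, by omega⟩
    · obtain ⟨x0, hx0⟩ := hxm ys
      obtain ⟨y0, hy0⟩ := hym xs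
      have : g xs ys = -1 := by rw [hg, h, h']; norm_num
      exact ⟨x0, xs, y0, ys, by omega, by omega⟩
    · exact absurd (h.trans h'.symm) hs
  obtain ⟨x1, x0, y1, y0, hX, hY⟩ := key
  have e1 := hadd x1 x0 ys y1
  have e2 := hadd x1 x0 ys y0
  have e3 := hadd xs x0 y0 y1
  have e4 := hadd xs x1 y0 y1
  have b1 := hb x1 y1
  have b2 := hb x0 y0
  have b3 := hb x1 y0
  have b4 := hb x0 y1
  have v11 : g x1 y1 = 1 := by omega
  have v00 : g x0 y0 = -1 := by omega
  have v10 : g x1 y0 = 0 := by omega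
  have v01 : g x0 y1 = 0 := by omega
  refine ⟨fun x => g x y1, fun y => 1 - g x1 y, ?_, ?_, ⟨x0, v01⟩, ⟨x1, v11⟩, ⟨y1, by simp [v11]⟩,
    ⟨y0, by simp [v10]⟩, ?_⟩
  · intro x
    have := hadd x x1 y1 y0
    have := hb x y1
    have := hb x y0
    show g x y1 = 0 ∨ g x y1 = 1
    omega
  · intro y
    have := hadd x1 x0 y y1
    have := hb x1 y
    have := hb x0 y
    show 1 - g x1 y = 0 ∨ 1 - g x1 y = 1
    omega
  · intro x y
    have := hadd x x1 y y1
    rw [← hg]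
    show g x y = g x y1 - (1 - g x1 y)
    omega

/-- the cyclic pattern -/
def Pat {X Y Z : Type*} (f : X → Y → Z → ℤ) (x : Fin 3 → X) (y : Fin 3 → Y) (z : Fin 3 → Z) :
    Prop :=
  (∀ a b w : Fin 3, a ≠ b →
    f (x a) (y b) (z w) = if (w - a).val < (b - a).val then 1 else 0) ∧
  ∀ a w : Fin 3, f (x a) (y a) (z w) = f (x a) (y a) (z 0)

theorem pattern_of_chain {X Y Z : Type*} {f : X → Y → Z → ℤ} (h01 : Zo f)
    (z0 z1 z2 : Z) (α α' α'' : X → ℤ) (β β' β'' : Y → ℤ)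
    (ha : ∀ x, α x = 0 ∨ α x = 1) (ha' : ∀ x, α' x = 0 ∨ α' x = 1)
    (ha'' : ∀ x, α'' x = 0 ∨ α'' x = 1)
    (hb : ∀ x, β x = 0 ∨ β x = 1) (hb' : ∀ x, β' x = 0 ∨ β' x = 1)
    (hb'' : ∀ x, β'' x = 0 ∨ β'' x = 1)
    (x1 x2 x0 : X) (hx1 : α x1 = 1) (hx2 : α'' x2 = 1) (hx0 : α' x0 = 0)
    (y1 y2 y0 : Y) (hy1 : β y1 = 1) (hy2 : β'' y2 = 1) (hy0 : β' y0 = 0)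
    (h1 : ∀ x y, f x y z1 - f x y z0 = α x - β y)
    (h2 : ∀ x y, f x y z2 - f x y z0 = α' x - β' y)
    (hA : ∀ x, α' x - α x = α'' x) (hB : ∀ y, β' y - β y = β'' y) :
    Pat f ![x0, x1, x2] ![y0, y1, y2] ![z0, z1, z2] := by
  have a1 : α x0 = 0 := by have := hA x0; have := ha x0; have := ha'' x0; omega
  have a2 : α' x1 = 1 := by have := hA x1; have := ha' x1; have := ha'' x1; omega
  have a3 : α' x2 = 1 := by have := hA x2; have := ha' x2; have := ha x2; omega
  have a4 : α x2 = 0 := by have := hA x2; have := ha' x2; have := ha x2; omega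
  have b1 : β y0 = 0 := by have := hB y0; have := hb y0; have := hb'' y0; omega
  have b2 : β' y1 = 1 := by have := hB y1; have := hb' y1; have := hb'' y1; omega
  have b3 : β' y2 = 1 := by have := hB y2; have := hb' y2; have := hb y2; omega
  have b4 : β y2 = 0 := by have := hB y2; have := hb' y2; have := hb y2; omega
  constructor
  · intro a b w hab
    have hv : ∀ x y, f x y z1 = f x y z0 + α x - β y := fun x y => by have := h1 x y; omega
    have hv' : ∀ x y, f x y z2 = f x y z0 + α' x - β' y := fun x y => by have := h2 x y; omega
    have k : ∀ x y, (f x y z0 = 0 ∨ f x y z0 = 1) ∧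
      (f x y z0 + α x - β y = 0 ∨ f x y z0 + α x - β y = 1) ∧
      (f x y z0 + α' x - β' y = 0 ∨ f x y z0 + α' x - β' y = 1) := fun x y =>
      ⟨h01 x y z0, hv x y ▸ h01 x y z1, hv' x y ▸ h01 x y z2⟩
    have k01 := k x0 y1
    have k02 := k x0 y2
    have k10 := k x1 y0
    have k12 := k x1 y2
    have k20 := k x2 y0
    have k21 := k x2 y1
    fin_cases a <;> fin_cases b <;> first | exact absurd rfl hab | skip
    all_goals fin_cases w <;> first | rw [if_pos (by decide)] | rw [if_neg (by decide)]
    all_goals simp [hv, hv'] <;> omega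
  · intro a w
    have hv : ∀ x y, f x y z1 = f x y z0 + α x - β y := fun x y => by have := h1 x y; omega
    have hv' : ∀ x y, f x y z2 = f x y z0 + α' x - β' y := fun x y => by have := h2 x y; omega
    fin_cases a <;> fin_cases w <;> simp [hv, hv'] <;> omega

/-- either diagonal boxes or the cyclic pattern -/
theorem box_or_pattern {X Y Z : Type*} {f : X → Y → Z → ℤ} (hc : Cub f) (h01 : Zo f)
    (hx : ∀ y z, ∃ x, f x y z = 0) (hy : ∀ x z, ∃ y, f x y z = 0) (hz : ∀ x y, ∃ z, f x y z = 0)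
    (hne : ∃ x y z, f x y z = 1) :
    (∃ (I : Set X) (J : Set Y) (K : Set Z), I.Nonempty ∧ J.Nonempty ∧ K.Nonempty ∧
      Iᶜ.Nonempty ∧ Jᶜ.Nonempty ∧ Kᶜ.Nonempty ∧
      (∀ x x', (∀ y z, f x y z = f x' y z) → x ∈ I → x' ∈ I) ∧
      (∀ y y', (∀ x z, f x y z = f x y' z) → y ∈ J → y' ∈ J) ∧
      (∀ z z', (∀ x y, f x y z = f x y z') → z ∈ K → z' ∈ K) ∧
      (∀ x ∈ I, ∀ y ∈ J, ∀ z ∈ K, f x y z = 1) ∧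
      (∀ x ∉ I, ∀ y ∉ J, ∀ z ∉ K, f x y z = 1)) ∨
    ∃ x y z, Pat f x y z := by
  obtain ⟨xs, ys, z1, h1⟩ := hne
  obtain ⟨z0, h0⟩ := hz xs ys
  have hne01 : ∃ x y, f x y z0 ≠ f x y z1 := ⟨xs, ys, by omega⟩
  obtain ⟨α, β, ha, hb, ⟨x0, hx0⟩, ⟨x1, hx1⟩, ⟨y0, hy0⟩, ⟨y1, hy1⟩, hab⟩ :=
    slice_diff hc h01 hx hy z0 z1 hne01
  by_cases h3 : ∀ z, (∀ x y, f x y z = f x y z0) ∨ (∀ x y, f x y z = f x y z1)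
  · left
    refine ⟨{x | α x = 1}, {y | β y = 0}, {z | ∀ x y, f x y z = f x y z1}, ⟨x1, hx1⟩, ⟨y0, hy0⟩,
      ⟨z1, fun _ _ => rfl⟩, ⟨x0, ?_⟩, ⟨y1, ?_⟩, ⟨z0, ?_⟩, ?_, ?_, ?_, ?_, ?_⟩
    · simp [hx0]
    · simp [hy1]
    · simp only [Set.mem_compl_iff, Set.mem_ofPred_eq]
      intro h
      obtain ⟨x, y, hh⟩ := hne01
      exact hh (h x y)
    · intro x x' h hxI
      have e1 := hab x y0
      have e2 := hab x' y0
      rw [h y0 z0, h y0 z1] at e1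
      simp only [Set.mem_ofPred_eq] at hxI ⊢
      omega
    · intro y y' h hyI
      have e1 := hab x0 y
      have e2 := hab x0 y'
      rw [h x0 z0, h x0 z1] at e1
      simp only [Set.mem_ofPred_eq] at hyI ⊢
      omega
    · intro z z' h hzI x y
      rw [← h]; exact hzI x y
    · intro x hxI y hyJ z hzK
      simp only [Set.mem_ofPred_eq] at hxI hyJ hzK
      have := hab x y
      rw [hzK]
      rcases h01 x y z0 with h | h <;> rcases h01 x y z1 with h' | h' <;> omega
    · intro x hxI y hyJ z hzK
      simp only [Set.mem_ofPred_eq] at hxI hyJ hzK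
      have := hab x y
      have hz0 := (h3 z).resolve_right hzK
      have := ha x
      have := hb y
      rw [hz0]
      rcases h01 x y z0 with h | h <;> rcases h01 x y z1 with h' | h' <;> omega
  · right
    push Not at h3
    obtain ⟨z2, ⟨u, v, h20⟩, ⟨u', v', h21⟩⟩ := h3
    obtain ⟨α', β', ha', hb', ⟨x0', hx0'⟩, ⟨x1', hx1'⟩, ⟨y0', hy0'⟩, ⟨y1', hy1'⟩, hab'⟩ :=
      slice_diff hc h01 hx hy z0 z2 ⟨u, v, h20.symm⟩
    obtain ⟨α'', β'', ha'', hb'', ⟨x0'', hx0''⟩, ⟨x1'', hx1''⟩, ⟨y0'', hy0''⟩, ⟨y1'', hy1''⟩, hab''⟩ :=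
      slice_diff hc h01 hx hy z1 z2 ⟨u', v', h21.symm⟩
    have hrel : ∀ x y, α' x - α x - α'' x = β' y - β y - β'' y := by
      intro x y
      have := hab x y
      have := hab' x y
      have := hab'' x y
      omega
    obtain ⟨c, hcdef⟩ : ∃ c, c = α' x0 - α x0 - α'' x0 := ⟨_, rfl⟩
    have hB : ∀ y, β' y - β y - β'' y = c := fun y => by rw [hcdef, hrel x0 y]
    have hA : ∀ x, α' x - α x - α'' x = c := fun x => by rw [hrel x y0, hB]
    have hc01 : c = 0 ∨ c = -1 := by
      have := hA x0''
      have := hA x1''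
      have := ha x0''
      have := ha' x0''
      have := ha x1''
      have := ha' x1''
      omega
    rcases hc01 with rfl | rfl
    · exact ⟨_, _, _, pattern_of_chain h01 z0 z1 z2 α α' α'' β β' β'' ha ha' ha'' hb hb' hb''
        x1 x1'' x0' hx1 hx1'' hx0' y1 y1'' y0' hy1 hy1'' hy0' hab hab'
        (fun x => by have := hA x; omega) (fun x => by have := hB x; omega)⟩
    · exact ⟨_, _, _, pattern_of_chain h01 z0 z2 z1 α' α (fun x => 1 - α'' x) β' β
        (fun x => 1 - β'' x) ha' ha
        (fun x => by have := ha'' x; show 1 - α'' x = 0 ∨ 1 - α'' x = 1; omega) hb' hb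
        (fun x => by have := hb'' x; show 1 - β'' x = 0 ∨ 1 - β'' x = 1; omega)
        x1' x0'' x0 hx1' (by simp [hx0'']) hx0 y1' y0'' y0 hy1' (by simp [hy0'']) hy0 hab' hab
        (fun x => by have := hA x; show _ = 1 - α'' x; omega)
        (fun x => by have := hB x; show _ = 1 - β'' x; omega)⟩

/-- two parallel empty lines force equal slices -/
theorem empty_lines {X Y Z : Type*} {f : X → Y → Z → ℤ} (hc : Cub f) (h01 : Zo f)
    (hz : ∀ x y, ∃ z, f x y z = 0) (x' : X) (y0 y1 : Y) (h0 : ∀ z, f x' y0 z = 0)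
    (h1 : ∀ z, f x' y1 z = 0) (x : X) (z : Z) : f x y0 z = f x y1 z := by
  obtain ⟨z1, hz1⟩ := hz x y0
  obtain ⟨z2, hz2⟩ := hz x y1
  have e1 := hc x x' y0 y1 z z1
  have e2 := hc x x' y0 y1 z z2
  simp only [h0, h1] at e1 e2
  have a1 := h01 x y0 z
  have a2 := h01 x y1 z
  have a3 := h01 x y1 z1
  have a4 := h01 x y0 z2
  omega

theorem conn {X Y : Type*} (h : X → Y → ℤ)
    (hadd : ∀ x x' y y', h x y - h x' y - h x y' + h x' y' = 0)
    (x : Fin 3 → X) (y : Fin 3 → Y) (h0 : ∀ a b, a ≠ b → h (x a) (y b) = 0)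
    (hX : ∀ x', ∃ b, h x' (y b) = 0) (hY : ∀ y', ∃ a, h (x a) y' = 0) (u : X) (v : Y) :
    h u v = 0 := by
  have h1 : ∀ a b, h (x a) (y b) = 0 := by
    intro a b
    by_cases hab : a = b
    · subst hab
      have e := hadd (x a) (x (a + 2)) (y a) (y (a + 1))
      rw [h0 (a + 2) a (by fin_cases a <;> decide), h0 a (a + 1) (by fin_cases a <;> decide),
        h0 (a + 2) (a + 1) (by fin_cases a <;> decide)] at e
      omega
    · exact h0 a b hab
  obtain ⟨b, hb⟩ := hX u
  obtain ⟨a, ha⟩ := hY v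
  have := hadd u (x a) v (y b)
  have := h1 a b
  omega

/-- a cuboid-balanced function supported over empty lines is constant along those lines -/
theorem fiber_inv {X Y Z : Type*} {f g : X → Y → Z → ℤ} (hc : Cub f) (h01 : Zo f)
    (hz : ∀ x y, ∃ z, f x y z = 0) (hg : Cub g)
    (x : Fin 3 → X) (y : Fin 3 → Y)
    (hxy : ∀ a b, a ≠ b → ∃ z, f (x a) (y b) z = 1)
    (hdx : ∃ y z, f (x 0) y z ≠ f (x 1) y z) (hdy : ∃ x z, f x (y 0) z ≠ f x (y 1) z)
    (hs : ∀ x y z, g x y z ≠ 0 → ∀ z', f x y z' = 0) (u : X) (v : Y) (z z' : Z) :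
    g u v z = g u v z' := by
  have hs' : ∀ x y, (∃ z', f x y z' = 1) → g x y z - g x y z' = 0 := by
    rintro x y ⟨w, hw⟩
    have : ∀ z, g x y z = 0 := by
      intro z
      by_contra h
      have := hs x y z h w
      omega
    rw [this, this]; rfl
  have hne : ∀ x y, (¬ ∀ z, f x y z = 0) → ∃ z, f x y z = 1 := by
    intro x y h
    push Not at h
    obtain ⟨z, h⟩ := h
    exact ⟨z, (h01 x y z).resolve_left h⟩
  have := conn (fun x y => g x y z - g x y z') ?_ x y ?_ ?_ ?_ u v
  · omega
  · intro x x' y y'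
    have := hg x x' y y' z z'
    omega
  · intro a b hab
    exact hs' _ _ (hxy a b hab)
  · intro x'
    by_cases k0 : ∀ z, f x' (y 0) z = 0
    · by_cases k1 : ∀ z, f x' (y 1) z = 0
      · obtain ⟨x, z, h⟩ := hdy
        exact absurd (empty_lines hc h01 hz x' (y 0) (y 1) k0 k1 x z) h
      · exact ⟨1, hs' _ _ (hne _ _ k1)⟩
    · exact ⟨0, hs' _ _ (hne _ _ k0)⟩
  · intro y'
    by_cases k0 : ∀ z, f (x 0) y' z = 0
    · by_cases k1 : ∀ z, f (x 1) y' z = 0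
      · obtain ⟨y, z, h⟩ := hdx
        exact absurd (empty_lines (f := fun y x z => f x y z) hc.swap12 (fun y x z => h01 x y z)
          (fun y x => hz x y) y' (x 0) (x 1) k0 k1 y z) h
      · exact ⟨1, hs' _ _ (hne _ _ k1)⟩
    · exact ⟨0, hs' _ _ (hne _ _ k0)⟩

theorem Pat.one {X Y Z : Type*} {f : X → Y → Z → ℤ} {x : Fin 3 → X} {y : Fin 3 → Y} {z : Fin 3 → Z}
    (h : Pat f x y z) (a b w : Fin 3) (hh : a ≠ b ∧ (w - a).val < (b - a).val) :
    f (x a) (y b) (z w) = 1 := by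
  rw [h.1 a b w hh.1, if_pos hh.2]

theorem Pat.zero {X Y Z : Type*} {f : X → Y → Z → ℤ} {x : Fin 3 → X} {y : Fin 3 → Y} {z : Fin 3 → Z}
    (h : Pat f x y z) (a b w : Fin 3) (hh : a ≠ b ∧ ¬ (w - a).val < (b - a).val) :
    f (x a) (y b) (z w) = 0 := by
  rw [h.1 a b w hh.1, if_neg hh.2]

theorem Pat.inv_z {X Y Z : Type*} {f g : X → Y → Z → ℤ} {x : Fin 3 → X} {y : Fin 3 → Y}
    {z : Fin 3 → Z} (h : Pat f x y z) (hc : Cub f) (h01 : Zo f)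
    (hz : ∀ x y, ∃ z, f x y z = 0) (hg : Cub g)
    (hs : ∀ x y z, g x y z ≠ 0 → ∀ z', f x y z' = 0) (u : X) (v : Y) (w w' : Z) :
    g u v w = g u v w' := by
  refine fiber_inv hc h01 hz hg x y ?_ ?_ ?_ hs u v w w'
  · intro a b hab
    refine ⟨z a, h.one a b a ⟨hab, ?_⟩⟩
    revert a b; decide
  · exact ⟨y 2, z 0, by rw [h.one 0 2 0 (by decide), h.zero 1 2 0 (by decide)]; decide⟩
  · exact ⟨x 2, z 0, by rw [h.zero 2 0 0 (by decide), h.one 2 1 0 (by decide)]; decide⟩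

theorem Pat.inv_x {X Y Z : Type*} {f g : X → Y → Z → ℤ} {x : Fin 3 → X} {y : Fin 3 → Y}
    {z : Fin 3 → Z} (h : Pat f x y z) (hc : Cub f) (h01 : Zo f)
    (hx : ∀ y z, ∃ x, f x y z = 0) (hg : Cub g)
    (hs : ∀ x y z, g x y z ≠ 0 → ∀ x', f x' y z = 0) (u u' : X) (v : Y) (w : Z) :
    g u v w = g u' v w := by
  refine fiber_inv (f := fun y z x => f x y z) (g := fun y z x => g x y z) hc.swap12.swap23
    (fun y z x => h01 x y z) hx hg.swap12.swap23 y z ?_ ?_ ?_ (fun y z x => hs x y z) v w u u'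
  · intro a b hab
    refine ⟨x b, h.one b a b ⟨hab.symm, ?_⟩⟩
    revert a b; decide
  · exact ⟨z 0, x 2, by
      show f (x 2) (y 0) (z 0) ≠ f (x 2) (y 1) (z 0)
      rw [h.zero 2 0 0 (by decide), h.one 2 1 0 (by decide)]; decide⟩
  · exact ⟨y 1, x 0, by
      show f (x 0) (y 1) (z 0) ≠ f (x 0) (y 1) (z 1)
      rw [h.one 0 1 0 (by decide), h.zero 0 1 1 (by decide)]; decide⟩

theorem Pat.inv_y {X Y Z : Type*} {f g : X → Y → Z → ℤ} {x : Fin 3 → X} {y : Fin 3 → Y}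
    {z : Fin 3 → Z} (h : Pat f x y z) (hc : Cub f) (h01 : Zo f)
    (hy : ∀ x z, ∃ y, f x y z = 0) (hg : Cub g)
    (hs : ∀ x y z, g x y z ≠ 0 → ∀ y', f x y' z = 0) (u : X) (v v' : Y) (w : Z) :
    g u v w = g u v' w := by
  refine fiber_inv (f := fun x z y => f x y z) (g := fun x z y => g x y z) hc.swap23
    (fun x z y => h01 x y z) hy hg.swap23 x (fun w => z (w + 2)) ?_ ?_ ?_
    (fun x z y => hs x y z) u w v v'
  · intro a b hab
    refine ⟨y b, h.one a b (b + 2) ⟨hab, ?_⟩⟩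
    revert a b; decide
  · exact ⟨z 0, y 2, by
      show f (x 0) (y 2) (z 0) ≠ f (x 1) (y 2) (z 0)
      rw [h.one 0 2 0 (by decide), h.zero 1 2 0 (by decide)]; decide⟩
  · exact ⟨x 0, y 1, by
      show f (x 0) (y 1) (z 2) ≠ f (x 0) (y 1) (z 0)
      rw [h.one 0 1 0 (by decide), h.zero 0 1 2 (by decide)]; decide⟩

/-- the complement of a cyclic pattern is not a disjoint union of fibered sets -/
theorem Pat.no_cover {X Y Z : Type*} {f : X → Y → Z → ℤ} {x : Fin 3 → X} {y : Fin 3 → Y}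
    {z : Fin 3 → Z} (h : Pat f x y z) (h01 : Zo f) (𝓛 : Set (X → Y → Z → Prop))
    (hcov : ∀ x y z, f x y z = 0 → ∃ V ∈ 𝓛, V x y z)
    (hoff : ∀ V ∈ 𝓛, ∀ x y z, V x y z → f x y z = 0)
    (hdisj : ∀ V ∈ 𝓛, ∀ V' ∈ 𝓛, ∀ x y z, V x y z → V' x y z → V = V')
    (hfib : ∀ V ∈ 𝓛, (∀ x x' y z, V x y z → V x' y z) ∨ (∀ x y y' z, V x y z → V x y' z) ∨
      (∀ x y z z', V x y z → V x y z')) : False := by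
  obtain ⟨V, hV, hV1⟩ := hcov _ _ _ (h.zero 0 1 2 (by decide))
  have hVz : ¬ (∀ x y z z', V x y z → V x y z') := by
    intro hh
    have := hoff V hV _ _ _ (hh _ _ _ (z 0) hV1)
    rw [h.one 0 1 0 (by decide)] at this
    exact absurd this (by decide)
  have hVy : ∀ x y y' z, V x y z → V x y' z := by
    rcases hfib V hV with hh | hh | hh
    · have := hoff V hV _ _ _ (hh _ (x 2) _ _ hV1)
      rw [h.one 2 1 2 (by decide)] at this
      exact absurd this (by decide)
    · exact hh
    · exact absurd hh hVz
  have hV2 := hVy _ _ (y 0) _ hV1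
  have e2 := hoff V hV _ _ _ hV2
  have e1 : f (x 0) (y 0) (z 1) = 0 := by rw [h.2 0 1, ← h.2 0 2, e2]
  obtain ⟨V', hV', hV1'⟩ := hcov _ _ _ e1
  rcases hfib V' hV' with hh | hh | hh
  · have := hoff V' hV' _ _ _ (hh _ (x 1) _ _ hV1')
    rw [h.one 1 0 1 (by decide)] at this
    exact absurd this (by decide)
  · have := hoff V' hV' _ _ _ (hh _ _ (y 2) _ hV1')
    rw [h.one 0 2 1 (by decide)] at this
    exact absurd this (by decide)
  · have := hdisj V hV V' hV' _ _ _ hV2 (hh _ _ _ (z 2) hV1')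
    exact hVz (this ▸ hh)
open ZMod in
theorem four_inj {M : ℕ} [NeZero M] (Φ : ZMod M → ℂ)
    (h : ∀ k : ZMod M, ∑ j, stdAddChar (j * k) * Φ j = 0) : Φ = 0 := by
  have : dft Φ = 0 := by
    funext k
    rw [dft_apply]
    have := h (-k)
    simpa [smul_eq_mul] using this
  simpa using this

open ZMod in
theorem mask_eval {M : ℕ} [NeZero M] (A : Finset (ZMod M)) (k : ZMod M) :
    aeval (stdAddChar k : ℂ) (maskPoly M A) = ∑ a ∈ A, stdAddChar (a * k) := by
  simp only [maskPoly, map_sum, map_pow, aeval_X]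
  refine Finset.sum_congr rfl fun a _ => ?_
  rw [← AddChar.map_nsmul_eq_pow]
  congr 1
  simp

open ZMod in
theorem std_pow_M {M : ℕ} [NeZero M] (k : ZMod M) : (stdAddChar k : ℂ) ^ M = 1 := by
  rw [← AddChar.map_nsmul_eq_pow]
  simp

open ZMod in
theorem galois_conj {M : ℕ} [NeZero M] (B : Finset (ZMod M)) (k u : ZMod M) (hu : IsUnit u)
    (h : ∑ b ∈ B, (stdAddChar (b * k) : ℂ) = 0) : ∑ b ∈ B, (stdAddChar (b * (u * k)) : ℂ) = 0 := by
  rw [← mask_eval] at h ⊢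
  have hpos : 0 < orderOf (stdAddChar k : ℂ) :=
    orderOf_pos_iff.mpr (isOfFinOrder_iff_pow_eq_one.mpr ⟨M, NeZero.pos M, std_pow_M k⟩)
  have hprim := IsPrimitiveRoot.orderOf (stdAddChar k : ℂ)
  have hdvd : orderOf (stdAddChar k : ℂ) ∣ M := orderOf_dvd_of_pow_eq_one (std_pow_M k)
  have hcop : Nat.Coprime u.val (orderOf (stdAddChar k : ℂ)) := by
    have : Nat.Coprime u.val M := by
      obtain ⟨v, rfl⟩ := hu
      exact ZMod.val_coe_unit_coprime v
    exact this.coprime_dvd_right hdvd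
  have e : (stdAddChar (u * k) : ℂ) = stdAddChar k ^ u.val := by
    rw [← AddChar.map_nsmul_eq_pow]; congr 1; simp
  rw [e]
  have hm := hprim.minpoly_eq_pow_coprime hcop
  have hd : minpoly ℤ (stdAddChar k : ℂ) ∣ maskPoly M B :=
    minpoly.isIntegrallyClosed_dvd (hprim.isIntegral hpos) h
  rw [hm] at hd
  obtain ⟨q, hq⟩ := hd
  rw [hq, map_mul, minpoly.aeval, zero_mul]

open ZMod in
theorem tile_four {M : ℕ} [NeZero M] (A B : Finset (ZMod M))
    (ht : IsTiling M (A : Set (ZMod M)) (B : Set (ZMod M))) (k : ZMod M) :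
    (∑ a ∈ A, (stdAddChar (a * k) : ℂ)) * ∑ b ∈ B, (stdAddChar (b * k) : ℂ)
      = ∑ z : ZMod M, stdAddChar (z * k) := by
  rw [Finset.sum_mul_sum, ← Finset.sum_product']
  refine Finset.sum_bij (fun p _ => p.1 + p.2) (fun _ _ => Finset.mem_univ _) ?_ ?_ ?_
  · intro p hp q hq h
    obtain ⟨_, _, hu⟩ := ht (q.1 + q.2)
    simp only [Finset.mem_product] at hp hq
    rw [hu p ⟨hp.1, hp.2, h⟩, hu q ⟨hq.1, hq.2, rfl⟩]
  · intro z _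
    obtain ⟨p, ⟨h1, h2, h3⟩, _⟩ := ht z
    exact ⟨p, Finset.mem_product.mpr ⟨h1, h2⟩, h3⟩
  · intro p _
    rw [add_mul, AddChar.map_add_eq_mul]

open ZMod in
theorem sum_std {M : ℕ} [NeZero M] (k : ZMod M) (hk : k ≠ 0) :
    ∑ z : ZMod M, (stdAddChar (z * k) : ℂ) = 0 := by
  have := AddChar.sum_mulShift (R := ZMod M) (R' := ℂ) k (isPrimitive_stdAddChar M)
  simpa [hk] using this

/-- Sands / Tijdeman -/
theorem sands {M : ℕ} [NeZero M] (A B : Finset (ZMod M))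
    (ht : IsTiling M (A : Set (ZMod M)) (B : Set (ZMod M))) (u : ZMod M) (hu : IsUnit u)
    (a a' b b' : ZMod M) (ha : a ∈ A) (ha' : a' ∈ A) (hb : b ∈ B) (hb' : b' ∈ B)
    (h : a - a' = u * (b - b')) : b = b' := by
  classical
  by_contra hne
  have hz : ∀ k : ZMod M, k ≠ 0 → (∑ a ∈ A, (ZMod.stdAddChar (a * k) : ℂ)) *
      ∑ b ∈ B, (ZMod.stdAddChar (b * (u * k)) : ℂ) = 0 := by
    intro k hk
    have := tile_four A B ht k
    rw [sum_std k hk, mul_eq_zero] at this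
    rcases this with h1 | h1
    · rw [h1, zero_mul]
    · rw [galois_conj B k u hu h1, mul_zero]
  have h0 : (A.card : ℂ) * B.card = M := by
    have := tile_four A B ht 0
    simpa using this
  have hS : (fun z : ZMod M => (∑ p ∈ A ×ˢ B, if p.1 + u * p.2 = z then (1 : ℂ) else 0) - 1) = 0 := by
    apply four_inj
    intro k
    simp only [mul_sub, Finset.sum_sub_distrib, mul_one, Finset.mul_sum]
    rw [Finset.sum_comm]
    simp only [mul_ite, mul_one, mul_zero, Finset.sum_ite_eq, Finset.mem_univ, if_true]
    have e : ∑ p ∈ A ×ˢ B, (ZMod.stdAddChar ((p.1 + u * p.2) * k) : ℂ) =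
      (∑ a ∈ A, (ZMod.stdAddChar (a * k) : ℂ)) *
      ∑ b ∈ B, (ZMod.stdAddChar (b * (u * k)) : ℂ) := by
      rw [Finset.sum_mul_sum, ← Finset.sum_product']
      refine Finset.sum_congr rfl fun p _ => ?_
      rw [← AddChar.map_add_eq_mul]; congr 1; ring
    rw [e]
    by_cases hk : k = 0
    · subst hk
      simp [h0]
    · rw [hz k hk, sum_std k hk, sub_zero]
  have h1 := congrFun hS (a + u * b')
  simp only [Pi.zero_apply, sub_eq_zero] at h1
  rw [← Finset.sum_filter, Finset.sum_const, nsmul_eq_mul, mul_one] at h1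
  have h2 : ((A ×ˢ B).filter (fun p => p.1 + u * p.2 = a + u * b')).card = 1 := by exact_mod_cast h1
  obtain ⟨q, hq⟩ := Finset.card_eq_one.mp h2
  have m1 : (a, b') ∈ (A ×ˢ B).filter (fun p => p.1 + u * p.2 = a + u * b') := by
    simp [ha, hb']
  have m2 : (a', b) ∈ (A ×ˢ B).filter (fun p => p.1 + u * p.2 = a + u * b') := by
    simp only [Finset.mem_filter, Finset.mem_product, ha', hb, true_and]
    linear_combination -h
  rw [hq, Finset.mem_singleton] at m1 m2
  exact hne (congrArg Prod.snd (m2.trans m1.symm))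

theorem prim_or {M : ℕ} [NeZero M] (k : ZMod M) :
    IsPrimitiveRoot (ZMod.stdAddChar k : ℂ) M ∨
      ∃ p : ℕ, p.Prime ∧ p ∣ M ∧ (ZMod.stdAddChar (((M / p : ℕ) : ZMod M) * k) : ℂ) = 1 := by
  have hdvd : orderOf (ZMod.stdAddChar k : ℂ) ∣ M := orderOf_dvd_of_pow_eq_one (std_pow_M k)
  have hM : M ≠ 0 := NeZero.ne M
  by_cases hs : orderOf (ZMod.stdAddChar k : ℂ) = M
  · left
    have := IsPrimitiveRoot.orderOf (ZMod.stdAddChar k : ℂ)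
    rwa [hs] at this
  · right
    obtain ⟨q, hq⟩ := hdvd
    have hq1 : q ≠ 1 := by
      rintro rfl
      rw [mul_one] at hq
      exact hs hq.symm
    obtain ⟨p, hp, t, rfl⟩ := Nat.exists_prime_and_dvd hq1
    refine ⟨p, hp, ⟨orderOf (ZMod.stdAddChar k : ℂ) * t, hq.trans (by ring)⟩, ?_⟩
    have e : M / p = orderOf (ZMod.stdAddChar k : ℂ) * t :=
      Nat.div_eq_of_eq_mul_right hp.pos (hq.trans (by ring))
    rw [← nsmul_eq_mul, AddChar.map_nsmul_eq_pow, e, pow_mul, pow_orderOf_eq_one, one_pow]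

/-- cuboid sums vanish -/
theorem cuboid {M : ℕ} [NeZero M] (A : Finset (ZMod M)) (hA : cycDvd M M A) (a b c : ZMod M)
    (habc : ∀ p : ℕ, p.Prime → p ∣ M → ((M / p : ℕ) : ZMod M) = a ∨ ((M / p : ℕ) : ZMod M) = b ∨
      ((M / p : ℕ) : ZMod M) = c) (r s t : ZMod M) (x : ZMod M) (χ : ZMod M → ℂ)
      (hχ : χ = fun y => open Classical in if y ∈ A then 1 else 0) :
    χ x - χ (x + r * a) - χ (x + s * b) - χ (x + t * c) + χ (x + r * a + s * b)
      + χ (x + r * a + t * c) + χ (x + s * b + t * c) - χ (x + r * a + s * b + t * c) = 0 := by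
  classical
  have key : (fun x => χ x - χ (x + r * a) - χ (x + s * b) - χ (x + t * c) + χ (x + r * a + s * b)
      + χ (x + r * a + t * c) + χ (x + s * b + t * c) - χ (x + r * a + s * b + t * c)) = 0 := by
    apply four_inj
    intro k
    have hA' : ∀ h : ZMod M, ∑ j, (ZMod.stdAddChar (j * k) : ℂ) * χ (j + h) =
        ZMod.stdAddChar (-(h * k)) * ∑ y ∈ A, (ZMod.stdAddChar (y * k) : ℂ) := by
      intro h
      rw [← Equiv.sum_comp (Equiv.subRight h)]
      simp only [Equiv.subRight_apply, sub_add_cancel, hχ, mul_ite, mul_one, mul_zero]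
      rw [← Finset.sum_filter, Finset.mul_sum]
      simp only [Finset.filter_univ_mem]
      refine Finset.sum_congr rfl fun y _ => ?_
      rw [← AddChar.map_add_eq_mul]; congr 1; ring
    have hA0 := hA' 0
    simp only [add_zero, zero_mul, neg_zero, AddChar.map_zero_eq_one, one_mul] at hA0
    simp only [mul_sub, mul_add, Finset.sum_sub_distrib, Finset.sum_add_distrib, add_assoc]
    simp only [hA', hA0]
    simp only [add_mul, neg_add, AddChar.map_add_eq_mul]
    set S := ∑ y ∈ A, (ZMod.stdAddChar (y * k) : ℂ) with hSdef
    have hfac : S = 0 ∨ (ZMod.stdAddChar (-(r * a * k)) : ℂ) = 1 ∨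
        (ZMod.stdAddChar (-(s * b * k)) : ℂ) = 1 ∨ (ZMod.stdAddChar (-(t * c * k)) : ℂ) = 1 := by
      have hgen : ∀ g w : ZMod M, (ZMod.stdAddChar (g * k) : ℂ) = 1 →
          (ZMod.stdAddChar (-(w * g * k)) : ℂ) = 1 := by
        intro g w hg
        rw [AddChar.map_neg_eq_inv]
        have : w * g * k = w.val • (g * k) := by simp [mul_assoc]
        rw [this, AddChar.map_nsmul_eq_pow, hg]; simp
      rcases prim_or k with h | ⟨p, hp, hpM, h⟩
      · left
        rw [hSdef, ← mask_eval]
        obtain ⟨q, hq⟩ := hA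
        rw [hq, map_mul]
        have := h.isRoot_cyclotomic (NeZero.pos M)
        rw [IsRoot.def, ← map_cyclotomic_int, eval_map] at this
        have h2 : aeval (ZMod.stdAddChar k : ℂ) (cyclotomic M ℤ) = 0 := by
          rw [aeval_def]; exact this
        rw [h2, zero_mul]
      · right
        rcases habc p hp hpM with e | e | e <;> rw [e] at h
        · exact Or.inl (hgen _ _ h)
        · exact Or.inr (Or.inl (hgen _ _ h))
        · exact Or.inr (Or.inr (hgen _ _ h))
    rcases hfac with h | h | h | h <;> rw [h] <;> ring
  exact congrFun key x

theorem natdvd {M : ℕ} [NeZero M] {d : ℕ} (hd : d ∣ M) (e : ZMod M) :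
    (d : ZMod M) ∣ e ↔ d ∣ e.val := by
  constructor
  · rintro ⟨c, hc⟩
    have h1 : ((e.val : ℕ) : ZMod M) = ((d * c.val : ℕ) : ZMod M) := by
      rw [Nat.cast_mul, ZMod.natCast_zmod_val, ZMod.natCast_zmod_val, hc]
    rw [ZMod.natCast_eq_natCast_iff] at h1
    rw [h1.dvd_iff hd]
    exact dvd_mul_right _ _
  · rintro ⟨c, hc⟩
    refine ⟨(c : ZMod M), ?_⟩
    rw [← Nat.cast_mul, ← hc, ZMod.natCast_zmod_val]

theorem gen_or {M p n m : ℕ} (hp : p.Prime) (hn : 1 ≤ n) (hM : M = p ^ n * m) (e : ZMod M) :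
    ((p ^ n : ℕ) : ZMod M) ∣ e ∨ e ∣ ((M / p : ℕ) : ZMod M) := by
  obtain ⟨d, hd, u, hu, rfl⟩ := ZMod.eq_unit_mul_divisor e
  by_cases h : p ^ n ∣ d
  · left
    obtain ⟨c, rfl⟩ := h
    push_cast
    exact Dvd.intro_left (u * c) (by ring)
  · right
    rw [hu.mul_left_dvd]
    apply Nat.cast_dvd_cast
    rw [hM] at hd
    obtain ⟨d1, d2, h1, h2, rfl⟩ := (Nat.dvd_mul).mp hd
    obtain ⟨k, hk, rfl⟩ := (Nat.dvd_prime_pow hp).mp h1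
    have hkn : k ≤ n - 1 := by
      by_contra hlt
      have : k = n := by omega
      subst this
      exact h (dvd_mul_right _ _)
    have e : M / p = p ^ (n - 1) * m := by
      apply Nat.div_eq_of_eq_mul_right hp.pos
      rw [hM, ← mul_assoc, ← pow_succ', Nat.sub_add_cancel hn]
    rw [e]
    exact mul_dvd_mul (pow_dvd_pow p hkn) h2

theorem unit_of_mutual {M : ℕ} [NeZero M] (e e' : ZMod M) (h : e ∣ e') (h' : e' ∣ e) :
    ∃ u, IsUnit u ∧ e' = u * e := by
  obtain ⟨d, hd, u, hu, rfl⟩ := ZMod.eq_unit_mul_divisor e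
  obtain ⟨d', hd', u', hu', rfl⟩ := ZMod.eq_unit_mul_divisor e'
  rw [hu.mul_left_dvd, hu'.dvd_mul_left] at h
  rw [hu'.mul_left_dvd, hu.dvd_mul_left] at h'
  have key : ∀ x y : ℕ, x ∣ M → (x : ZMod M) ∣ (y : ZMod M) → x ∣ y := by
    intro x y hx hxy
    rw [natdvd hx, ZMod.val_natCast, Nat.dvd_mod_iff hx] at hxy
    exact hxy
  have : d = d' := Nat.dvd_antisymm (key _ _ hd h) (key _ _ hd' h')
  subst this
  obtain ⟨v, rfl⟩ := hu
  obtain ⟨v', rfl⟩ := hu'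
  refine ⟨↑(v' * v⁻¹), Units.isUnit _, ?_⟩
  rw [← mul_assoc, ← Units.val_mul, inv_mul_cancel_right]

theorem div_eq {M p n m : ℕ} (hp : p.Prime) (hn : 1 ≤ n) (hM : M = p ^ n * m) :
    M / p = p ^ (n - 1) * m := by
  apply Nat.div_eq_of_eq_mul_right hp.pos
  rw [hM, ← mul_assoc, ← pow_succ', Nat.sub_add_cancel hn]

theorem sat {M p n m : ℕ} [NeZero M] (hp : p.Prime) (hn : 1 ≤ n) (hM : M = p ^ n * m)
    (A B : Finset (ZMod M)) (ht : IsTiling M (A : Set (ZMod M)) (B : Set (ZMod M)))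
    (x y b b' : ZMod M) (hy : y ∈ A) (hx : x + (b - b') ∈ A) (hb : b ∈ B) (hb' : b' ∈ B)
    (h : ((M / p : ℕ) : ZMod M) ∣ x - y) : ((p ^ (n - 1) : ℕ) : ZMod M) ∣ b - b' := by
  have h1 : ((p ^ (n - 1) : ℕ) : ZMod M) ∣ x - y := by
    refine dvd_trans (Nat.cast_dvd_cast ?_) h
    rw [div_eq hp hn hM]; exact dvd_mul_right _ _
  have h2 : ((p ^ (n - 1) : ℕ) : ZMod M) ∣ ((p ^ n : ℕ) : ZMod M) :=
    Nat.cast_dvd_cast (pow_dvd_pow p (Nat.sub_le n 1))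
  rcases gen_or hp hn hM (b - b') with k1 | k1
  · exact h2.trans k1
  rcases gen_or hp hn hM (b - b' + (x - y)) with k2 | k2
  · exact (dvd_add_left h1).mp (h2.trans k2)
  have j1 := k1.trans h
  have j2 := k2.trans h
  obtain ⟨u, hu, e⟩ := unit_of_mutual (b - b') (b - b' + (x - y)) (dvd_add dvd_rfl j1)
    ((dvd_add_left j2).mp dvd_rfl)
  have := sands A B ht u hu _ y b b' hx hy hb hb' (by rw [← e]; ring)
  rw [this, sub_self]; exact dvd_zero _

theorem line_zero {M p n m : ℕ} [NeZero M] (hp : p.Prime) (hn : 1 ≤ n) (hM : M = p ^ n * m)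
    (hc : Nat.Coprime p m) (r : ZMod M) (h : ((p ^ n : ℕ) : ZMod M) ∣ r * ((M / p : ℕ) : ZMod M)) :
    r * ((M / p : ℕ) : ZMod M) = 0 := by
  have h1 : ((m : ℕ) : ZMod M) ∣ r * ((M / p : ℕ) : ZMod M) := by
    refine dvd_trans (Nat.cast_dvd_cast ?_) (dvd_mul_left _ _)
    rw [div_eq hp hn hM]; exact dvd_mul_left _ _
  rw [natdvd (by rw [hM]; exact dvd_mul_left _ _)] at h1
  rw [natdvd (by rw [hM]; exact dvd_mul_right _ _)] at h
  have h2 : M ∣ (r * ((M / p : ℕ) : ZMod M)).val := by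
    have := (Nat.Coprime.pow_left n hc).mul_dvd_of_dvd_of_dvd h h1
    rwa [← hM] at this
  rw [← ZMod.natCast_zmod_val (r * ((M / p : ℕ) : ZMod M))]
  exact (ZMod.natCast_eq_zero_iff _ _).mpr h2

theorem line_mul {M p n m : ℕ} [NeZero M] (hp : p.Prime) (hn : 1 ≤ n) (hM : M = p ^ n * m)
    (hc : Nat.Coprime p m) (r r' : ZMod M)
    (h : r * ((M / p : ℕ) : ZMod M) = 0 → r' * ((M / p : ℕ) : ZMod M) = 0) :
    ∃ μ, μ * (r * ((M / p : ℕ) : ZMod M)) = r' * ((M / p : ℕ) : ZMod M) := by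
  rcases gen_or hp hn hM (r * ((M / p : ℕ) : ZMod M)) with k | k
  · exact ⟨0, by rw [h (line_zero hp hn hM hc r k), zero_mul]⟩
  · obtain ⟨w, hw⟩ := k
    refine ⟨r' * w, ?_⟩
    conv_rhs => rw [hw]
    ring

theorem p_mul_div {M p : ℕ} (h : p ∣ M) : (p : ZMod M) * ((M / p : ℕ) : ZMod M) = 0 := by
  rw [← Nat.cast_mul, Nat.mul_div_cancel' h, ZMod.natCast_self]

theorem idem {M p q r : ℕ} (hp : p ∣ M) (hq : q ∣ M) (hr : r ∣ M) (hc : Nat.Coprime p (q * r)) :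
    ∃ E : ZMod M, E * ((M / p : ℕ) : ZMod M) = ((M / p : ℕ) : ZMod M) ∧
      E * ((M / q : ℕ) : ZMod M) = 0 ∧ E * ((M / r : ℕ) : ZMod M) = 0 := by
  obtain ⟨α, β, h⟩ := Nat.isCoprime_iff_coprime.mpr hc
  have h' : (α : ZMod M) * p + β * (q * r) = 1 := by
    have := congrArg (Int.cast : ℤ → ZMod M) h
    push_cast at this
    exact this
  refine ⟨β * (q * r), ?_, ?_, ?_⟩
  · linear_combination ((M / p : ℕ) : ZMod M) * h' - α * p_mul_div hp
  · linear_combination (β * r : ZMod M) * p_mul_div hq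
  · linear_combination (β * q : ZMod M) * p_mul_div hr

theorem Cub.sub_inv {X Y Z : Type*} {f g : X → Y → Z → ℤ} (hf : Cub f)
    (hg : (∀ x x' y z, g x y z = g x' y z) ∨ (∀ x y y' z, g x y z = g x y' z) ∨
      (∀ x y z z', g x y z = g x y z')) : Cub (fun x y z => f x y z - g x y z) := by
  intro x x' y y' z z'
  have h := hf x x' y y' z z'
  dsimp only
  rcases hg with h1 | h1 | h1
  · linear_combination h - h1 x x' y z + h1 x x' y' z + h1 x x' y z' - h1 x x' y' z'
  · linear_combination h - h1 x y y' z + h1 x' y y' z + h1 x y y' z' - h1 x' y y' z'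
  · linear_combination h - h1 x y z z' + h1 x' y z z' + h1 x y' z z' - h1 x' y' z z'

open Classical in
/-- indicator function of a set in the coordinates `r, s, t` of the grid through `x0` -/
noncomputable def gind {R : Type*} [CommRing R] (x0 a b c : R) (S : Set R) (r s t : R) : ℤ :=
  if x0 + r * a + s * b + t * c ∈ S then 1 else 0

theorem gind_zo {R : Type*} [CommRing R] (x0 a b c : R) (S : Set R) : Zo (gind x0 a b c S) := by
  intro r s t
  unfold gind
  split_ifs <;> simp

theorem gind_one {R : Type*} [CommRing R] {x0 a b c : R} {S : Set R} {r s t : R} :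
    gind x0 a b c S r s t = 1 ↔ x0 + r * a + s * b + t * c ∈ S := by
  unfold gind
  split_ifs with h <;> simp [h]

theorem gind_zero {R : Type*} [CommRing R] {x0 a b c : R} {S : Set R} {r s t : R} :
    gind x0 a b c S r s t = 0 ↔ x0 + r * a + s * b + t * c ∉ S := by
  unfold gind
  split_ifs with h <;> simp [h]

theorem gind_congr {R : Type*} [CommRing R] {x0 a b c : R} {S T : Set R} {r s t r' s' t' : R}
    (h : x0 + r * a + s * b + t * c ∈ S ↔ x0 + r' * a + s' * b + t' * c ∈ T) :
    gind x0 a b c S r s t = gind x0 a b c T r' s' t' := by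
  by_cases h' : x0 + r * a + s * b + t * c ∈ S
  · rw [gind_one.mpr h', gind_one.mpr (h.mp h')]
  · rw [gind_zero.mpr h', gind_zero.mpr (fun k => h' (h.mpr k))]

/-- `f` is a coset of one of the ideals generated by `a`, `b`, `c` -/
def IsFib {R : Type*} [CommRing R] (a b c : R) (f : Set R) : Prop :=
  ∃ x : R, f = {y | a ∣ y - x} ∨ f = {y | b ∣ y - x} ∨ f = {y | c ∣ y - x}

theorem IsFib.inv {R : Type*} [CommRing R] {a b c : R} {f : Set R} (hf : IsFib a b c f) (x0 : R) :
    (∀ r r' s t : R, x0 + r * a + s * b + t * c ∈ f → x0 + r' * a + s * b + t * c ∈ f) ∨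
    (∀ r s s' t : R, x0 + r * a + s * b + t * c ∈ f → x0 + r * a + s' * b + t * c ∈ f) ∨
    (∀ r s t t' : R, x0 + r * a + s * b + t * c ∈ f → x0 + r * a + s * b + t' * c ∈ f) := by
  obtain ⟨x, h | h | h⟩ := hf
  · left
    subst h
    rintro r r' s t ⟨w, hw⟩
    exact ⟨w + r' - r, by linear_combination hw⟩
  · right; left
    subst h
    rintro r s s' t ⟨w, hw⟩
    exact ⟨w + s' - s, by linear_combination hw⟩
  · right; right
    subst h
    rintro r s t t' ⟨w, hw⟩
    exact ⟨w + t' - t, by linear_combination hw⟩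

theorem IsFib.nonempty {R : Type*} [CommRing R] {a b c : R} {f : Set R} (hf : IsFib a b c f) :
    f.Nonempty := by
  obtain ⟨x, h | h | h⟩ := hf <;> exact ⟨x, by rw [h]; simp⟩

/-- remove disjoint fibers from a set as long as possible -/
theorem grid_residual {R : Type*} [CommRing R] (x0 a b c : R) (S : Set R) (W : Finset R) :
    (W : Set R) ⊆ S → Cub (gind x0 a b c (W : Set R)) →
    (∃ F : Set (Set R), (∀ f ∈ F, IsFib a b c f) ∧ (∀ f ∈ F, ∀ g ∈ F, f ≠ g → Disjoint f g) ∧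
      ⋃₀ F = S \ W) →
    ∃ W : Finset R, (W : Set R) ⊆ S ∧ Cub (gind x0 a b c (W : Set R)) ∧
    (∃ F : Set (Set R), (∀ f ∈ F, IsFib a b c f) ∧ (∀ f ∈ F, ∀ g ∈ F, f ≠ g → Disjoint f g) ∧
      ⋃₀ F = S \ W) ∧ ∀ f, IsFib a b c f → ¬ f ⊆ W := by
  classical
  induction W using Finset.strongInduction with
  | H W ih =>
    intro hWS hC hF
    by_cases hno : ∀ f, IsFib a b c f → ¬ f ⊆ (W : Set R)
    · exact ⟨W, hWS, hC, hF, hno⟩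
    push Not at hno
    obtain ⟨f, hf, hfW⟩ := hno
    obtain ⟨x, hx⟩ := hf.nonempty
    refine ih (W.filter (· ∉ f)) ?_ ?_ ?_ ?_
    · rw [Finset.ssubset_iff_of_subset (Finset.filter_subset _ _)]
      exact ⟨x, by exact_mod_cast hfW hx, by simp [hx]⟩
    · refine subset_trans ?_ hWS
      exact_mod_cast Finset.filter_subset _ _
    · have e : gind x0 a b c ((W.filter (· ∉ f) : Finset R) : Set R) =
          fun r s t => gind x0 a b c (W : Set R) r s t - gind x0 a b c f r s t := by
        funext r s t
        have := @hfW (x0 + r * a + s * b + t * c)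
        unfold gind
        by_cases h1 : x0 + r * a + s * b + t * c ∈ f
        · simp [h1, show x0 + r * a + s * b + t * c ∈ W by exact_mod_cast this h1]
        · simp [h1]
      rw [e]
      apply hC.sub_inv
      rcases hf.inv x0 with h | h | h
      · left; exact fun _ _ _ _ => gind_congr ⟨h _ _ _ _, h _ _ _ _⟩
      · right; left; exact fun _ _ _ _ => gind_congr ⟨h _ _ _ _, h _ _ _ _⟩
      · right; right; exact fun _ _ _ _ => gind_congr ⟨h _ _ _ _, h _ _ _ _⟩
    · obtain ⟨F, h1, h2, h3⟩ := hF
      have hd : ∀ g ∈ F, Disjoint f g := by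
        intro g hg
        rw [Set.disjoint_left]
        intro y hy hy'
        have : y ∈ S \ (W : Set R) := by rw [← h3]; exact ⟨g, hg, hy'⟩
        exact this.2 (hfW hy)
      refine ⟨insert f F, ?_, ?_, ?_⟩
      · rintro g (rfl | hg)
        · exact hf
        · exact h1 g hg
      · rintro g (rfl | hg) g' (rfl | hg') hne
        · exact absurd rfl hne
        · exact hd _ hg'
        · exact (hd _ hg).symm
        · exact h2 _ hg _ hg' hne
      · rw [Set.sUnion_insert, h3]
        ext y
        have := @hfW y
        have h4 := @hWS y
        simp only [Set.mem_union, Set.mem_sdiff, Finset.coe_filter, Set.mem_ofPred_eq,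
          Finset.mem_coe] at this h4 ⊢
        tauto

theorem core_s11 {M : ℕ} [NeZero M] (A B : Finset (ZMod M))
    (ht : IsTiling M (A : Set (ZMod M)) (B : Set (ZMod M))) (x0 a b c qi qj qk : ZMod M)
    (hcub : ∀ y0, Cub (gind y0 a b c (A : Set (ZMod M))))
    (sati : ∀ x y b b', y ∈ A → x + (b - b') ∈ A → b ∈ B → b' ∈ B → a ∣ x - y → qi ∣ b - b')
    (satj : ∀ x y b' b'', y ∈ A → x + (b' - b'') ∈ A → b' ∈ B → b'' ∈ B → b ∣ x - y →
      qj ∣ b' - b'')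
    (satk : ∀ x y b b', y ∈ A → x + (b - b') ∈ A → b ∈ B → b' ∈ B → c ∣ x - y → qk ∣ b - b')
    (hspan : ∀ e, qi ∣ e → qj ∣ e → qk ∣ e → ∃ r s t, e = r * a + s * b + t * c)
    (hmut : ∀ r s t r' s' t' : ZMod M, (r * a = 0 ↔ r' * a = 0) → (s * b = 0 ↔ s' * b = 0) →
      (t * c = 0 ↔ t' * c = 0) → (r * a + s * b + t * c) ∣ (r' * a + s' * b + t' * c))
    (hnofib : ¬ ∃ F : Set (Set (ZMod M)), (∀ f ∈ F, IsFib a b c f) ∧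
      (∀ f ∈ F, ∀ g ∈ F, f ≠ g → Disjoint f g) ∧
      ⋃₀ F = {y | y ∈ A ∧ ∃ r s t, y = x0 + r * a + s * b + t * c}) :
    ∃ I J K : Set (ZMod M), I.Nonempty ∧ J.Nonempty ∧ K.Nonempty ∧ Iᶜ.Nonempty ∧ Jᶜ.Nonempty ∧
      Kᶜ.Nonempty ∧ (∀ r r', r * a = r' * a → r ∈ I → r' ∈ I) ∧
      (∀ r r', r * b = r' * b → r ∈ J → r' ∈ J) ∧ (∀ r r', r * c = r' * c → r ∈ K → r' ∈ K) ∧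
      (∀ r ∈ I, ∀ s ∈ J, ∀ t ∈ K, x0 + r * a + s * b + t * c ∈ A) ∧
      (∀ r ∉ I, ∀ s ∉ J, ∀ t ∉ K, x0 + r * a + s * b + t * c ∈ A) := by
  classical
  set S : Set (ZMod M) := {y | y ∈ A ∧ ∃ r s t, y = x0 + r * a + s * b + t * c} with hS
  have hmS : ∀ r s t, x0 + r * a + s * b + t * c ∈ S ↔ x0 + r * a + s * b + t * c ∈ A :=
    fun r s t => ⟨fun h => h.1, fun h => ⟨h, r, s, t, rfl⟩⟩
  have hfin : ((S.toFinite.toFinset : Finset (ZMod M)) : Set (ZMod M)) = S := S.toFinite.coe_toFinset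
  obtain ⟨W, hWS, hC, ⟨F, hF1, hF2, hF3⟩, hno⟩ := grid_residual x0 a b c S S.toFinite.toFinset
    (by rw [hfin]) (by
      have : gind x0 a b c (S.toFinite.toFinset : Set (ZMod M)) =
          gind x0 a b c (A : Set (ZMod M)) := by
        rw [hfin]; funext r s t; exact gind_congr (hmS r s t)
      rw [this]; exact hcub x0)
    ⟨∅, by simp, by simp, by rw [hfin, sdiff_self]; simp⟩
  have hWA : ∀ y ∈ W, y ∈ A := fun y hy => (hWS hy).1
  have hne : W.Nonempty := by
    by_contra h
    rw [Finset.not_nonempty_iff_eq_empty] at h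
    subst h
    exact hnofib ⟨F, hF1, hF2, by rw [hF3]; simp⟩
  set f := gind x0 a b c (W : Set (ZMod M)) with hf
  have h01 : Zo f := gind_zo _ _ _ _ _
  have hW1 : ∀ {r s t}, f r s t = 1 → x0 + r * a + s * b + t * c ∈ W := fun h => gind_one.mp h
  have hx : ∀ y z, ∃ x, f x y z = 0 := by
    intro s t
    by_contra! h
    refine hno {y | a ∣ y - (x0 + s * b + t * c)} ⟨_, Or.inl rfl⟩ ?_
    rintro y ⟨r, hr⟩
    have : y = x0 + r * a + s * b + t * c := by linear_combination hr
    rw [this]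
    exact hW1 ((h01 r s t).resolve_left (h r))
  have hy : ∀ x z, ∃ y, f x y z = 0 := by
    intro r t
    by_contra! h
    refine hno {y | b ∣ y - (x0 + r * a + t * c)} ⟨_, Or.inr (Or.inl rfl)⟩ ?_
    rintro y ⟨s, hr⟩
    have : y = x0 + r * a + s * b + t * c := by linear_combination hr
    rw [this]
    exact hW1 ((h01 r s t).resolve_left (h s))
  have hz : ∀ x y, ∃ z, f x y z = 0 := by
    intro r s
    by_contra! h
    refine hno {y | c ∣ y - (x0 + r * a + s * b)} ⟨_, Or.inr (Or.inr rfl)⟩ ?_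
    rintro y ⟨t, hr⟩
    have : y = x0 + r * a + s * b + t * c := by linear_combination hr
    rw [this]
    exact hW1 ((h01 r s t).resolve_left (h t))
  have hne' : ∃ x y z, f x y z = 1 := by
    obtain ⟨w, hw⟩ := hne
    obtain ⟨-, r, s, t, rfl⟩ := hWS hw
    exact ⟨r, s, t, gind_one.mpr hw⟩
  have sx : ∀ r r', r * a = r' * a → ∀ s t, f r s t = f r' s t := by
    intro r r' h s t; exact gind_congr (by rw [h])
  have sy : ∀ s s', s * b = s' * b → ∀ r t, f r s t = f r s' t := by
    intro r r' h s t; exact gind_congr (by rw [h])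
  have sz : ∀ t t', t * c = t' * c → ∀ r s, f r s t = f r s t' := by
    intro r r' h s t; exact gind_congr (by rw [h])
  rcases box_or_pattern hC h01 hx hy hz hne' with
    ⟨I, J, K, hI, hJ, hK, hI', hJ', hK', hsI, hsJ, hsK, h1, h2⟩ | ⟨x, y, z, hP⟩
  · refine ⟨I, J, K, hI, hJ, hK, hI', hJ', hK', ?_, ?_, ?_, ?_, ?_⟩
    · exact fun r r' h => hsI r r' (sx r r' h)
    · exact fun r r' h => hsJ r r' (sy r r' h)
    · exact fun r r' h => hsK r r' (sz r r' h)
    · exact fun r hr s hs t ht => hWA _ (hW1 (h1 r hr s hs t ht))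
    · exact fun r hr s hs t ht => hWA _ (hW1 (h2 r hr s hs t ht))
  exfalso
  obtain ⟨⟨a0, b0⟩, ⟨-, hb0, -⟩, -⟩ := ht 0
  dsimp only at hb0
  have huniq : ∀ u b1 b2, u + (b0 - b1) ∈ A → b1 ∈ B → u + (b0 - b2) ∈ A → b2 ∈ B → b1 = b2 := by
    intro u b1 b2 h1 hb1 h2 hb2
    have := (ht (u + b0)).unique (y₁ := (u + (b0 - b1), b1)) (y₂ := (u + (b0 - b2), b2))
      ⟨h1, hb1, by dsimp only; ring⟩ ⟨h2, hb2, by dsimp only; ring⟩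
    exact congrArg Prod.snd this
  have nz : ∀ {r r' d : ZMod M}, r * d ≠ r' * d → (r - r') * d ≠ 0 := by
    intro r r' d h h'
    exact h (by linear_combination h')
  have x02 : (x 0 - x 2) * a ≠ 0 := nz fun h => by
    have := sx _ _ h (y 1) (z 2)
    rw [hP.zero 0 1 2 (by decide), hP.one 2 1 2 (by decide)] at this
    exact zero_ne_one this
  have x01 : (x 0 - x 1) * a ≠ 0 := nz fun h => by
    have := sx _ _ h (y 2) (z 0)
    rw [hP.one 0 2 0 (by decide), hP.zero 1 2 0 (by decide)] at this
    exact one_ne_zero this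
  have y12 : (y 1 - y 2) * b ≠ 0 := nz fun h => by
    have := sy _ _ h (x 0) (z 1)
    rw [hP.zero 0 1 1 (by decide), hP.one 0 2 1 (by decide)] at this
    exact zero_ne_one this
  have z01 : (z 0 - z 1) * c ≠ 0 := nz fun h => by
    have := sz _ _ h (x 0) (y 1)
    rw [hP.one 0 1 0 (by decide), hP.zero 0 1 1 (by decide)] at this
    exact one_ne_zero this
  have z02 : (z 0 - z 2) * c ≠ 0 := nz fun h => by
    have := sz _ _ h (x 0) (y 1)
    rw [hP.one 0 1 0 (by decide), hP.zero 0 1 2 (by decide)] at this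
    exact one_ne_zero this
  have PA : ∀ i j k : Fin 3, i ≠ j ∧ (k - i).val < (j - i).val →
      x0 + x i * a + y j * b + z k * c ∈ A := fun i j k h => hWA _ (hW1 (hP.one i j k h))
  -- differences in the span cannot occur
  have hspan' : ∀ b' ∈ B, b' ≠ b0 → ¬ ∃ r s t, b0 - b' = r * a + s * b + t * c := by
    rintro b' hb' hne ⟨r, s, t, he⟩
    have fin : ∀ i j k i' j' k' : Fin 3, (i ≠ j ∧ (k - i).val < (j - i).val) →
        (i' ≠ j' ∧ (k' - i').val < (j' - i').val) → (r * a = 0 ↔ (x i - x i') * a = 0) →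
        (s * b = 0 ↔ (y j - y j') * b = 0) → (t * c = 0 ↔ (z k - z k') * c = 0) → False := by
      intro i j k i' j' k' h h' hr hs ht'
      have m1 := hmut _ _ _ _ _ _ hr hs ht'
      have m2 := hmut _ _ _ _ _ _ hr.symm hs.symm ht'.symm
      obtain ⟨u, hu, hu'⟩ := unit_of_mutual _ _ m1 m2
      refine hne (sands A B ht u hu _ _ _ _ (PA i j k h) (PA i' j' k' h') hb0 hb' ?_).symm
      rw [he, ← hu']
      ring
    have ne : b0 - b' ≠ 0 := fun h => hne (sub_eq_zero.mp h).symm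
    by_cases hr : r * a = 0 <;> by_cases hs : s * b = 0 <;> by_cases ht' : t * c = 0
    · exact ne (by rw [he, hr, hs, ht']; simp)
    · exact fin 0 2 0 0 2 1 (by decide) (by decide) (by simp [hr]) (by simp [hs])
        (by simp [ht', z01])
    · exact fin 0 1 0 0 2 0 (by decide) (by decide) (by simp [hr]) (by simp [hs, y12])
        (by simp [ht'])
    · exact fin 0 1 0 0 2 1 (by decide) (by decide) (by simp [hr]) (by simp [hs, y12])
        (by simp [ht', z01])
    · exact fin 0 1 0 2 1 0 (by decide) (by decide) (by simp [hr, x02]) (by simp [hs])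
        (by simp [ht'])
    · exact fin 0 1 0 2 1 2 (by decide) (by decide) (by simp [hr, x02]) (by simp [hs])
        (by simp [ht', z02])
    · exact fin 0 2 0 2 1 0 (by decide) (by decide) (by simp [hr, x02])
        (by
          have : (y 2 - y 1) * b ≠ 0 := fun h => y12 (by linear_combination -h)
          simp [hs, this])
        (by simp [ht'])
    · exact fin 0 1 0 1 2 1 (by decide) (by decide) (by simp [hr, x01]) (by simp [hs, y12])
        (by simp [ht', z01])
  refine hP.no_cover h01
    ({V | ∃ g ∈ F, V = fun r s t => x0 + r * a + s * b + t * c ∈ g} ∪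
     {V | ∃ b' ∈ B, b' ≠ b0 ∧ V = fun r s t => x0 + r * a + s * b + t * c + (b0 - b') ∈ A})
    ?_ ?_ ?_ ?_
  · intro r s t h0
    have h0' : x0 + r * a + s * b + t * c ∉ W := gind_zero.mp h0
    by_cases hA : x0 + r * a + s * b + t * c ∈ A
    · have : x0 + r * a + s * b + t * c ∈ ⋃₀ F := by
        rw [hF3]; exact ⟨(hmS r s t).mpr hA, h0'⟩
      obtain ⟨g, hg, hm⟩ := this
      exact ⟨_, Or.inl ⟨g, hg, rfl⟩, hm⟩
    · obtain ⟨⟨a', b'⟩, ⟨ha', hb', e⟩, -⟩ := ht (x0 + r * a + s * b + t * c + b0)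
      dsimp only at ha' hb' e
      have e2 : x0 + r * a + s * b + t * c + (b0 - b') = a' := by linear_combination -e
      refine ⟨_, Or.inr ⟨b', hb', ?_, rfl⟩, ?_⟩
      · rintro rfl
        apply hA
        rw [sub_self, add_zero] at e2
        rw [e2]; exact ha'
      · rw [e2]; exact ha'
  · rintro V (⟨g, hg, rfl⟩ | ⟨b', hb', hne, rfl⟩) r s t hV
    · have : x0 + r * a + s * b + t * c ∈ ⋃₀ F := ⟨g, hg, hV⟩
      rw [hF3] at this
      exact gind_zero.mpr this.2
    · refine gind_zero.mpr fun h => hne ?_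
      refine huniq _ b' b0 hV hb' ?_ hb0
      rw [sub_self, add_zero]; exact hWA _ h
  · have mixed : ∀ g ∈ F, ∀ b' ∈ B, b' ≠ b0 → ∀ u, u ∈ g → u + (b0 - b') ∈ A → False := by
      intro g hg b' hb' hne u h1 h2
      have : u ∈ ⋃₀ F := ⟨g, hg, h1⟩
      rw [hF3] at this
      refine hne (huniq u b' b0 h2 hb' ?_ hb0)
      rw [sub_self, add_zero]; exact this.1.1
    rintro V (⟨g, hg, rfl⟩ | ⟨b', hb', hne, rfl⟩) V' (⟨g', hg', rfl⟩ | ⟨b'', hb'', hne', rfl⟩)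
      r s t hV hV'
    · have : g = g' := by
        by_contra h
        exact Set.disjoint_left.mp (hF2 g hg g' hg' h) hV hV'
      rw [this]
    · exact (mixed g hg _ hb'' hne' _ hV hV').elim
    · exact (mixed g' hg' _ hb' hne _ hV' hV).elim
    · rw [huniq _ _ _ hV hb' hV' hb'']
  · rintro V (⟨g, hg, rfl⟩ | ⟨b', hb', hne, rfl⟩)
    · exact (hF1 g hg).inv x0
    · have hsh : ∀ r s t, x0 + r * a + s * b + t * c + (b0 - b') ∈ A ↔
          gind (x0 + (b0 - b')) a b c (A : Set (ZMod M)) r s t = 1 := by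
        intro r s t
        rw [gind_one, Finset.mem_coe]
        rw [show x0 + (b0 - b') + r * a + s * b + t * c =
          x0 + r * a + s * b + t * c + (b0 - b') by ring]
      have hg0 : ∀ r s t, gind (x0 + (b0 - b')) a b c (A : Set (ZMod M)) r s t ≠ 0 →
          x0 + r * a + s * b + t * c + (b0 - b') ∈ A := by
        intro r s t h
        exact (hsh r s t).mpr ((gind_zo _ _ _ _ _ r s t).resolve_left h)
      by_cases hi : qi ∣ b0 - b'
      · by_cases hj : qj ∣ b0 - b'
        · by_cases hk : qk ∣ b0 - b'
          · exact (hspan' b' hb' hne (hspan _ hi hj hk)).elim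
          · right; right
            intro r s t t' hV
            rw [hsh] at hV ⊢
            rw [← hV]
            refine hP.inv_z hC h01 hz (hcub _) ?_ _ _ _ _
            intro r s t h t'
            refine gind_zero.mpr fun h' => hk ?_
            exact satk _ _ _ _ (hWA _ h') (hg0 r s t h) hb0 hb' ⟨t - t', by ring⟩
        · right; left
          intro r s t t' hV
          rw [hsh] at hV ⊢
          rw [← hV]
          refine hP.inv_y hC h01 hy (hcub _) ?_ _ _ _ _
          intro r s t h t'
          refine gind_zero.mpr fun h' => hj ?_
          exact satj _ _ _ _ (hWA _ h') (hg0 r s t h) hb0 hb' ⟨s - t', by ring⟩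
      · left
        intro r s t t' hV
        rw [hsh] at hV ⊢
        rw [← hV]
        refine hP.inv_x hC h01 hx (hcub _) ?_ _ _ _ _
        intro r s t h t'
        refine gind_zero.mpr fun h' => hi ?_
        exact sati _ _ _ _ (hWA _ h') (hg0 r s t h) hb0 hb' ⟨r - t', by ring⟩

theorem mut_dvd {R : Type*} [CommRing R] {a b c Ea Eb Ec r s t r' s' t' μ ν ρ : R}
    (a1 : Ea * a = a) (a2 : Ea * b = 0) (a3 : Ea * c = 0)
    (b1 : Eb * b = b) (b2 : Eb * a = 0) (b3 : Eb * c = 0)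
    (c1 : Ec * c = c) (c2 : Ec * a = 0) (c3 : Ec * b = 0)
    (h1 : μ * (r * a) = r' * a) (h2 : ν * (s * b) = s' * b) (h3 : ρ * (t * c) = t' * c) :
    (r * a + s * b + t * c) ∣ (r' * a + s' * b + t' * c) := by
  refine ⟨μ * Ea + ν * Eb + ρ * Ec, ?_⟩
  linear_combination -h1 - h2 - h3 - μ * r * a1 - μ * s * a2 - μ * t * a3
    - ν * s * b1 - ν * r * b2 - ν * t * b3 - ρ * t * c1 - ρ * r * c2 - ρ * s * c3

/-- arithmetic of the three directions -/
theorem arith_span {M pi pj pk ni nj nk D : ℕ} [NeZero M]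
    (hpi : pi.Prime) (hpj : pj.Prime) (hpk : pk.Prime)
    (hij : pi ≠ pj) (hik : pi ≠ pk) (hjk : pj ≠ pk) (hni : 1 ≤ ni) (hnj : 1 ≤ nj) (hnk : 1 ≤ nk)
    (hM : M = pi ^ ni * pj ^ nj * pk ^ nk)
    (hD : D = pi ^ (ni - 1) * pj ^ (nj - 1) * pk ^ (nk - 1)) :
    (M / pi = D * (pj * pk) ∧ M / pj = D * (pi * pk) ∧ M / pk = D * (pi * pj)) ∧
    ∀ e : ZMod M, (D : ZMod M) ∣ e ↔ ∃ r s t : ZMod M,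
      e = r * ((M / pi : ℕ) : ZMod M) + s * ((M / pj : ℕ) : ZMod M) + t * ((M / pk : ℕ) : ZMod M) := by
  obtain ⟨ni, rfl⟩ : ∃ n, ni = n + 1 := ⟨ni - 1, by omega⟩
  obtain ⟨nj, rfl⟩ : ∃ n, nj = n + 1 := ⟨nj - 1, by omega⟩
  obtain ⟨nk, rfl⟩ : ∃ n, nk = n + 1 := ⟨nk - 1, by omega⟩
  simp only [Nat.add_sub_cancel] at hD
  have e1 : M / pi = D * (pj * pk) :=
    Nat.div_eq_of_eq_mul_right hpi.pos (by rw [hM, hD]; ring)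
  have e2 : M / pj = D * (pi * pk) :=
    Nat.div_eq_of_eq_mul_right hpj.pos (by rw [hM, hD]; ring)
  have e3 : M / pk = D * (pi * pj) :=
    Nat.div_eq_of_eq_mul_right hpk.pos (by rw [hM, hD]; ring)
  refine ⟨⟨e1, e2, e3⟩, fun e => ?_⟩
  rw [e1, e2, e3]
  push_cast
  constructor
  · rintro ⟨w, rfl⟩
    have c1 : Nat.Coprime pi pj := (Nat.coprime_primes hpi hpj).mpr hij
    have c2 : Nat.Coprime (pi * pj) pk :=
      Nat.Coprime.mul_left ((Nat.coprime_primes hpi hpk).mpr hik)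
        ((Nat.coprime_primes hpj hpk).mpr hjk)
    obtain ⟨α, β, h⟩ := Nat.isCoprime_iff_coprime.mpr c1
    obtain ⟨γ, δ, h'⟩ := Nat.isCoprime_iff_coprime.mpr c2
    have k1 : (α : ZMod M) * pi + β * pj = 1 := by
      have := congrArg (Int.cast : ℤ → ZMod M) h
      push_cast at this
      exact this
    have k2 : (γ : ZMod M) * (pi * pj) + δ * pk = 1 := by
      have := congrArg (Int.cast : ℤ → ZMod M) h'
      push_cast at this
      exact this
    refine ⟨w * δ * β, w * δ * α, w * γ, ?_⟩
    linear_combination (-(D : ZMod M) * w) * k2 - (D : ZMod M) * w * δ * pk * k1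
  · rintro ⟨r, s, t, rfl⟩
    exact ⟨r * (pj * pk) + s * (pi * pk) + t * (pi * pj), by ring⟩

theorem sim_iff {M p n m : ℕ} [NeZero M] (hp : p.Prime) (hn : 1 ≤ n) (hM : M = p ^ n * m)
    (hc : Nat.Coprime p m) (r r' u : ZMod M) (hu : ((p ^ n : ℕ) : ZMod M) ∣ u) :
    ((p ^ n : ℕ) : ZMod M) ∣ (r - r') * ((M / p : ℕ) : ZMod M) + u ↔
      r * ((M / p : ℕ) : ZMod M) = r' * ((M / p : ℕ) : ZMod M) := by
  constructor
  · intro h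
    have := line_zero hp hn hM hc (r - r') ((dvd_add_left hu).mp h)
    linear_combination this
  · intro h
    have : (r - r') * ((M / p : ℕ) : ZMod M) = 0 := by linear_combination h
    rw [this, zero_add]; exact hu

theorem cub_of {M : ℕ} [NeZero M] (A : Finset (ZMod M)) (hA : cycDvd M M A) (a b c : ZMod M)
    (habc : ∀ p : ℕ, p.Prime → p ∣ M → ((M / p : ℕ) : ZMod M) = a ∨ ((M / p : ℕ) : ZMod M) = b ∨
      ((M / p : ℕ) : ZMod M) = c) (y0 : ZMod M) : Cub (gind y0 a b c (A : Set (ZMod M))) := by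
  classical
  intro r r' s s' t t'
  have h := cuboid A hA a b c habc (r' - r) (s' - s) (t' - t) (y0 + r * a + s * b + t * c) _ rfl
  have key : ∀ u v w z, z = y0 + u * a + v * b + w * c →
      (if z ∈ A then (1 : ℂ) else 0) = ((gind y0 a b c (A : Set (ZMod M)) u v w : ℤ) : ℂ) := by
    rintro u v w z rfl
    by_cases h : y0 + u * a + v * b + w * c ∈ A
    · rw [if_pos h, gind_one.mpr (by exact_mod_cast h), Int.cast_one]
    · rw [if_neg h, gind_zero.mpr (by exact_mod_cast h), Int.cast_zero]
  rw [key r s t _ rfl, key r' s t _ (by ring), key r s' t _ (by ring), key r s t' _ (by ring),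
    key r' s' t _ (by ring), key r' s t' _ (by ring), key r s' t' _ (by ring),
    key r' s' t' _ (by ring)] at h
  exact_mod_cast h

/-- **Diagonal boxes.** Let `M = p_i^{n_i} p_j^{n_j} p_k^{n_k}`, `A ⊕ B = ℤ_M`,
`Φ_M | A`. If `A ∩ Λ` (for a `D(M)`-grid `Λ`) cannot be written as a union of pairwise
disjoint `M`-fibers, then `A` contains diagonal boxes on `Λ`: a nonempty box `P ⊆ Λ` with
nonempty complementary box `P°` and `P ∪ P° ⊆ A`. -/
theorem statement11
    (pi pj pk : ℕ) (hpi : pi.Prime) (hpj : pj.Prime) (hpk : pk.Prime)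
    (hij : pi ≠ pj) (hik : pi ≠ pk) (hjk : pj ≠ pk)
    (ni nj nk : ℕ) (hni : 1 ≤ ni) (hnj : 1 ≤ nj) (hnk : 1 ≤ nk)
    (M : ℕ) (hM : M = pi ^ ni * pj ^ nj * pk ^ nk)
    (A B : Finset (ZMod M))
    (htile : IsTiling M (A : Set (ZMod M)) (B : Set (ZMod M)))
    (hPhiM : cycDvd M M A)
    (x0 : ZMod M) (D : ℕ) (hD : D = pi ^ (ni - 1) * pj ^ (nj - 1) * pk ^ (nk - 1))
    (hnofib : ¬ ∃ F : Set (Set (ZMod M)),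
      (∀ f ∈ F, ∃ x : ZMod M,
        f = gridSet M x (M / pi) ∨ f = gridSet M x (M / pj) ∨ f = gridSet M x (M / pk)) ∧
      (∀ f ∈ F, ∀ g ∈ F, f ≠ g → Disjoint f g) ∧
      ⋃₀ F = (A : Set (ZMod M)) ∩ gridSet M x0 D) :
    ∃ P : Set (ZMod M),
      IsBox M (pi ^ ni) (pj ^ nj) (pk ^ nk) (gridSet M x0 D) P ∧
      P.Nonempty ∧
      (compBox M (pi ^ ni) (pj ^ nj) (pk ^ nk) (gridSet M x0 D) P).Nonempty ∧
      P ∪ compBox M (pi ^ ni) (pj ^ nj) (pk ^ nk) (gridSet M x0 D) P ⊆ (A : Set (ZMod M)) := by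
  have : NeZero M := ⟨by
    rw [hM]
    exact (Nat.mul_pos (Nat.mul_pos (pow_pos hpi.pos _) (pow_pos hpj.pos _))
      (pow_pos hpk.pos _)).ne'⟩
  have cij := (Nat.coprime_primes hpi hpj).mpr hij
  have cik := (Nat.coprime_primes hpi hpk).mpr hik
  have cjk := (Nat.coprime_primes hpj hpk).mpr hjk
  have hMi : M = pi ^ ni * (pj ^ nj * pk ^ nk) := by rw [hM]; ring
  have hMj : M = pj ^ nj * (pi ^ ni * pk ^ nk) := by rw [hM]; ring
  have hMk : M = pk ^ nk * (pi ^ ni * pj ^ nj) := by rw [hM]; ring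
  have ci : Nat.Coprime pi (pj ^ nj * pk ^ nk) :=
    Nat.Coprime.mul_right (cij.pow_right _) (cik.pow_right _)
  have cj : Nat.Coprime pj (pi ^ ni * pk ^ nk) :=
    Nat.Coprime.mul_right (cij.symm.pow_right _) (cjk.pow_right _)
  have ck : Nat.Coprime pk (pi ^ ni * pj ^ nj) :=
    Nat.Coprime.mul_right (cik.symm.pow_right _) (cjk.symm.pow_right _)
  have di : pi ∣ M := by rw [hMi]; exact Dvd.dvd.mul_right (dvd_pow_self _ (by omega)) _
  have dj : pj ∣ M := by rw [hMj]; exact Dvd.dvd.mul_right (dvd_pow_self _ (by omega)) _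
  have dk : pk ∣ M := by rw [hMk]; exact Dvd.dvd.mul_right (dvd_pow_self _ (by omega)) _
  obtain ⟨⟨-, -, -⟩, hsp⟩ := arith_span hpi hpj hpk hij hik hjk hni hnj hnk hM hD
  have hgrid : ∀ y, y ∈ gridSet M x0 D ↔ ∃ r s t : ZMod M,
      y = x0 + r * ((M / pi : ℕ) : ZMod M) + s * ((M / pj : ℕ) : ZMod M)
        + t * ((M / pk : ℕ) : ZMod M) := by
    intro y
    change (D : ZMod M) ∣ y - x0 ↔ _
    rw [hsp]
    constructor
    · rintro ⟨r, s, t, h⟩; exact ⟨r, s, t, by linear_combination h⟩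
    · rintro ⟨r, s, t, h⟩; exact ⟨r, s, t, by linear_combination h⟩
  have hdvd : ∀ {p q n m : ℕ}, q.Prime → 1 ≤ n → M = q ^ n * m → p ∣ m →
      ((p : ℕ) : ZMod M) ∣ ((M / q : ℕ) : ZMod M) := by
    intro p q n m hq hn hM' hp
    apply Nat.cast_dvd_cast
    rw [div_eq hq hn hM']
    exact hp.mul_left _
  have dij : ((pi ^ ni : ℕ) : ZMod M) ∣ ((M / pj : ℕ) : ZMod M) :=
    hdvd hpj hnj hMj (dvd_mul_right _ _)
  have dik : ((pi ^ ni : ℕ) : ZMod M) ∣ ((M / pk : ℕ) : ZMod M) :=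
    hdvd hpk hnk hMk (dvd_mul_right _ _)
  have dji : ((pj ^ nj : ℕ) : ZMod M) ∣ ((M / pi : ℕ) : ZMod M) :=
    hdvd hpi hni hMi (dvd_mul_right _ _)
  have djk : ((pj ^ nj : ℕ) : ZMod M) ∣ ((M / pk : ℕ) : ZMod M) :=
    hdvd hpk hnk hMk (dvd_mul_left _ _)
  have dki : ((pk ^ nk : ℕ) : ZMod M) ∣ ((M / pi : ℕ) : ZMod M) :=
    hdvd hpi hni hMi (dvd_mul_left _ _)
  have dkj : ((pk ^ nk : ℕ) : ZMod M) ∣ ((M / pj : ℕ) : ZMod M) :=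
    hdvd hpj hnj hMj (dvd_mul_left _ _)
  obtain ⟨Ea, a1, a2, a3⟩ := idem di dj dk (Nat.Coprime.mul_right cij cik)
  obtain ⟨Eb, b1, b2, b3⟩ := idem dj di dk (Nat.Coprime.mul_right cij.symm cjk)
  obtain ⟨Ec, c1, c2, c3⟩ := idem dk di dj (Nat.Coprime.mul_right cik.symm cjk.symm)
  have simi := fun r r' u hu => sim_iff hpi hni hMi ci r r' u hu
  have simj := fun r r' u hu => sim_iff hpj hnj hMj cj r r' u hu
  have simk := fun r r' u hu => sim_iff hpk hnk hMk ck r r' u hu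
  have hcore := core_s11 A B htile x0 ((M / pi : ℕ) : ZMod M) ((M / pj : ℕ) : ZMod M)
    ((M / pk : ℕ) : ZMod M) ((pi ^ (ni - 1) : ℕ) : ZMod M) ((pj ^ (nj - 1) : ℕ) : ZMod M)
    ((pk ^ (nk - 1) : ℕ) : ZMod M)
    (cub_of A hPhiM _ _ _ (by
      intro p hp hpM
      rw [hM, hp.dvd_mul, hp.dvd_mul] at hpM
      rcases hpM with (h | h) | h
      · left; rw [(Nat.prime_dvd_prime_iff_eq hp hpi).mp (hp.dvd_of_dvd_pow h)]
      · right; left; rw [(Nat.prime_dvd_prime_iff_eq hp hpj).mp (hp.dvd_of_dvd_pow h)]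
      · right; right; rw [(Nat.prime_dvd_prime_iff_eq hp hpk).mp (hp.dvd_of_dvd_pow h)]))
    (sat hpi hni hMi A B htile) (sat hpj hnj hMj A B htile) (sat hpk hnk hMk A B htile)
    (by
      intro e h1 h2 h3
      rw [← hsp]
      have di' : pi ^ (ni - 1) ∣ M := by
        rw [hMi]; exact Dvd.dvd.mul_right (pow_dvd_pow _ (Nat.sub_le _ _)) _
      have dj' : pj ^ (nj - 1) ∣ M := by
        rw [hMj]; exact Dvd.dvd.mul_right (pow_dvd_pow _ (Nat.sub_le _ _)) _
      have dk' : pk ^ (nk - 1) ∣ M := by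
        rw [hMk]; exact Dvd.dvd.mul_right (pow_dvd_pow _ (Nat.sub_le _ _)) _
      have k1 : Nat.Coprime (pi ^ (ni - 1)) (pj ^ (nj - 1)) := cij.pow _ _
      have k2 : Nat.Coprime (pi ^ (ni - 1) * pj ^ (nj - 1)) (pk ^ (nk - 1)) :=
        Nat.Coprime.mul_left (cik.pow _ _) (cjk.pow _ _)
      rw [natdvd di'] at h1
      rw [natdvd dj'] at h2
      rw [natdvd dk'] at h3
      have dD : D ∣ M := by
        rw [hD]
        exact k2.mul_dvd_of_dvd_of_dvd (k1.mul_dvd_of_dvd_of_dvd di' dj') dk'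
      rw [natdvd dD, hD]
      exact k2.mul_dvd_of_dvd_of_dvd (k1.mul_dvd_of_dvd_of_dvd h1 h2) h3)
    (by
      intro r s t r' s' t' hr hs ht
      obtain ⟨μ, h1⟩ := line_mul hpi hni hMi ci r r' hr.mp
      obtain ⟨ν, h2⟩ := line_mul hpj hnj hMj cj s s' hs.mp
      obtain ⟨ρ, h3⟩ := line_mul hpk hnk hMk ck t t' ht.mp
      exact mut_dvd a1 a2 a3 b1 b2 b3 c1 c2 c3 h1 h2 h3)
    (by
      rintro ⟨F, h1, h2, h3⟩
      refine hnofib ⟨F, h1, h2, ?_⟩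
      rw [h3]
      ext y
      rw [Set.mem_inter_iff, hgrid]
      rfl)
  clear hnofib htile hPhiM a1 a2 a3 b1 b2 b3 c1 c2 c3 hsp
  generalize ((M / pi : ℕ) : ZMod M) = a at *
  generalize ((M / pj : ℕ) : ZMod M) = b at *
  generalize ((M / pk : ℕ) : ZMod M) = c at *
  obtain ⟨I, J, K, ⟨r0, hr0⟩, ⟨s0, hs0⟩, ⟨t0, ht0⟩, ⟨r1, hr1⟩, ⟨s1, hs1⟩, ⟨t1, ht1⟩, hI, hJ, hK,
    h1, h2⟩ := hcore
  have gi : ∀ r s t r' s' t' : ZMod M, ((pi ^ ni : ℕ) : ZMod M) ∣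
      (x0 + r * a + s * b + t * c) - (x0 + r' * a + s' * b + t' * c) ↔ r * a = r' * a := by
    intro r s t r' s' t'
    rw [← simi r r' ((s - s') * b + (t - t') * c)
      (dvd_add (dij.mul_left _) (dik.mul_left _))]
    rw [show (x0 + r * a + s * b + t * c) - (x0 + r' * a + s' * b + t' * c) =
      (r - r') * a + ((s - s') * b + (t - t') * c) by ring]
  have gj : ∀ r s t r' s' t' : ZMod M, ((pj ^ nj : ℕ) : ZMod M) ∣
      (x0 + r * a + s * b + t * c) - (x0 + r' * a + s' * b + t' * c) ↔ s * b = s' * b := by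
    intro r s t r' s' t'
    rw [← simj s s' ((r - r') * a + (t - t') * c)
      (dvd_add (dji.mul_left _) (djk.mul_left _))]
    rw [show (x0 + r * a + s * b + t * c) - (x0 + r' * a + s' * b + t' * c) =
      (s - s') * b + ((r - r') * a + (t - t') * c) by ring]
  have gk : ∀ r s t r' s' t' : ZMod M, ((pk ^ nk : ℕ) : ZMod M) ∣
      (x0 + r * a + s * b + t * c) - (x0 + r' * a + s' * b + t' * c) ↔ t * c = t' * c := by
    intro r s t r' s' t'
    rw [← simk t t' ((r - r') * a + (s - s') * b)
      (dvd_add (dki.mul_left _) (dkj.mul_left _))]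
    rw [show (x0 + r * a + s * b + t * c) - (x0 + r' * a + s' * b + t' * c) =
      (t - t') * c + ((r - r') * a + (s - s') * b) by ring]
  refine ⟨{y | ∃ r ∈ I, ∃ s ∈ J, ∃ t ∈ K, y = x0 + r * a + s * b + t * c}, ⟨?_, ?_⟩, ?_, ?_, ?_⟩
  · rintro y ⟨r, -, s, -, t, -, rfl⟩
    exact (hgrid _).mpr ⟨r, s, t, rfl⟩
  · rintro u ⟨ru, hru, su, hsu, tu, htu, rfl⟩ v ⟨rv, hrv, sv, hsv, tv, htv, rfl⟩ w
      ⟨rw, hrw, sw, hsw, tw, htw, rfl⟩ y hy ku kv kw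
    obtain ⟨r, s, t, rfl⟩ := (hgrid y).mp hy
    exact ⟨r, hI _ _ ((gi _ _ _ _ _ _).mp ku).symm hru, s,
      hJ _ _ ((gj _ _ _ _ _ _).mp kv).symm hsv, t, hK _ _ ((gk _ _ _ _ _ _).mp kw).symm htw, rfl⟩
  · exact ⟨_, r0, hr0, s0, hs0, t0, ht0, rfl⟩
  · refine ⟨x0 + r1 * a + s1 * b + t1 * c, (hgrid _).mpr ⟨_, _, _, rfl⟩, ?_⟩
    rintro u ⟨r, hr, s, hs, t, ht, rfl⟩
    refine ⟨fun h => hr1 ?_, fun h => hs1 ?_, fun h => ht1 ?_⟩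
    · exact hI _ _ ((gi _ _ _ _ _ _).mp h).symm hr
    · exact hJ _ _ ((gj _ _ _ _ _ _).mp h).symm hs
    · exact hK _ _ ((gk _ _ _ _ _ _).mp h).symm ht
  · rintro y (⟨r, hr, s, hs, t, ht, rfl⟩ | ⟨hy, hy'⟩)
    · exact h1 r hr s hs t ht
    · obtain ⟨r, s, t, rfl⟩ := (hgrid y).mp hy
      refine h2 r ?_ s ?_ t ?_
      · intro hr
        exact (hy' (x0 + r * a + s0 * b + t0 * c) ⟨r, hr, s0, hs0, t0, ht0, rfl⟩).1
          ((gi _ _ _ _ _ _).mpr rfl)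
      · intro hs
        exact (hy' (x0 + r0 * a + s * b + t0 * c) ⟨r0, hr0, s, hs, t0, ht0, rfl⟩).2.1
          ((gj _ _ _ _ _ _).mpr rfl)
      · intro ht
        exact (hy' (x0 + r0 * a + s0 * b + t * c) ⟨r0, hr0, s0, hs0, t, ht, rfl⟩).2.2
          ((gk _ _ _ _ _ _).mpr rfl)
end
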